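/- Let R be a commutative Noetherian ring, 𝔞 ⊆ 𝔟 proper ideals of R with dim R/𝔟 ≤ 1, and M an R-module such that Ext^i_R(R/𝔞, M) is a finitely generated R-module for every i ≥ 0. Then H^i_𝔟(M) is 𝔟-cofinite for every i ≥ 0. -/

import Mathlib

open CategoryTheory

universe u

/-- The `R`-module `Ext^i_R(N, M)` for two `R`-modules (objects of `ModuleCat R`). -/
noncomputable def extObj {R : Type u} [CommRing R] (N M : ModuleCat.{u} R) (i : ℕ) :
    ModuleCat.{u} R :=
  ((Ext R (ModuleCat.{u} R) i).obj (Opposite.op N)).obj M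

/-- The `R`-module `Ext^i_R(R/𝔞, M)`. -/
noncomputable def extIdeal {R : Type u} [CommRing R] (𝔞 : Ideal R) (i : ℕ)
    (M : ModuleCat.{u} R) : ModuleCat.{u} R :=
  extObj (ModuleCat.of R (R ⧸ 𝔞)) M i

/-- An `R`-module `M` is `𝔞`-cofinite if `Supp_R M ⊆ V(𝔞)` and `Ext^i_R(R/𝔞, M)` is a finitely
generated `R`-module for every `i ≥ 0`. -/
def IsCofinite {R : Type u} [CommRing R] (𝔞 : Ideal R) (M : ModuleCat.{u} R) : Prop :=
  Module.support R M ⊆ PrimeSpectrum.zeroLocus (𝔞 : Set R) ∧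
    ∀ i : ℕ, Module.Finite R (extIdeal 𝔞 i M)

/-- The Krull dimension `dim_R M` of an `R`-module `M`: the Krull dimension of its support,
i.e. the supremum of `dim R/𝔭` over primes `𝔭` in the support of `M`. -/
noncomputable def moduleDim (R : Type u) [CommRing R] (M : Type u) [AddCommGroup M]
    [Module R M] : WithBot ℕ∞ :=
  Order.krullDim (Module.support R M)

/-- An `R`-module `M` is in `FD_{≤n}` if there is a finitely generated submodule `N ⊆ M`
with `dim_R (M/N) ≤ n`. -/
def MemFD (R : Type u) [CommRing R] (n : ℕ) (M : Type u) [AddCommGroup M] [Module R M] : Prop :=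
  ∃ N : Submodule R M, N.FG ∧ moduleDim R (M ⧸ N) ≤ (n : WithBot ℕ∞)

/-- An `R`-module `M` is `𝔞`-torsion if every element is annihilated by some power of `𝔞`. -/
def IsTorsionIdeal {R : Type u} [CommRing R] (𝔞 : Ideal R) (M : Type u) [AddCommGroup M]
    [Module R M] : Prop :=
  ∀ m : M, ∃ n : ℕ, ∀ a ∈ 𝔞 ^ n, a • m = 0

/-- The arithmetic rank of an ideal `𝔞`: the least `n` such that there exist `a₁, …, aₙ ∈ R`
with `Rad (a₁, …, aₙ) = Rad 𝔞`. -/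
noncomputable def arithRank {R : Type u} [CommRing R] (𝔞 : Ideal R) : ℕ :=
  sInf {n : ℕ | ∃ f : Fin n → R, (Ideal.span (Set.range f)).radical = 𝔞.radical}

noncomputable section

open Limits

namespace CategoryTheory.ProjectiveResolution
variable {R : Type u} [CommRing R] {X : ModuleCat.{u} R} (P : ProjectiveResolution X)
  (Y : ModuleCat.{u} R) (n : ℕ)

lemma smul_extMk {m : ℕ} (f : P.complex.X n ⟶ Y) (hm : n + 1 = m)
    (hf : P.complex.d m n ≫ f = 0) (r : R) :
    r • P.extMk f m hm hf = P.extMk (r • f) m hm (by simp [hf]) := by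
  rw [Abelian.Ext.smul_eq_comp_mk₀, extMk_comp_mk₀]
  congr 1

lemma hom_eq_zero_of_extMk_eq_zero (f : P.complex.X 0 ⟶ Y) (m : ℕ) (hm : 0 + 1 = m)
    (hf : P.complex.d m 0 ≫ f = 0) (h : P.extMk f m hm hf = 0) : f = 0 := by
  rw [← P.extEquivCohomologyClass.apply_eq_iff_eq, extEquivCohomologyClass_extMk,
    extEquivCohomologyClass_zero, CochainComplex.HomComplex.CohomologyClass.mk_eq_zero_iff,
    CochainComplex.HomComplex.Cocycle.toSingleMk_mem_coboundaries_iff _ _ _ _ _ 1 (by lia)] at h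
  obtain ⟨g, hg⟩ := h
  have hz : IsZero (P.cochainComplex.X 1) :=
    HomologicalComplex.isZero_extend_X _ _ _ (by simp; lia)
  rw [hz.eq_of_src g 0, comp_zero] at hg
  rw [← cancel_epi (P.cochainComplexXIso (-(0 : ℕ)) 0 rfl).hom, comp_zero]
  exact hg.symm

/-- The underlying morphism of a cocycle of `Hom(P, Y)`. -/
def cyclesHom : (P.complex.linearYonedaObj R Y).cycles n →ₗ[R] (P.complex.X n ⟶ Y) :=
  ((P.complex.linearYonedaObj R Y).iCycles n).hom

lemma d_comp_cyclesHom (z : (P.complex.linearYonedaObj R Y).cycles n) :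
    P.complex.d (n + 1) n ≫ P.cyclesHom Y n z = 0 := by
  have h := (P.complex.linearYonedaObj R Y).iCycles_d n (n + 1)
  exact congr($h z)

lemma exists_cyclesHom_eq (f : P.complex.X n ⟶ Y) (hf : P.complex.d (n + 1) n ≫ f = 0) :
    ∃ z, P.cyclesHom Y n z = f := by
  have h : Function.Exact ((P.complex.linearYonedaObj R Y).iCycles n).hom
      ((P.complex.linearYonedaObj R Y).d n (n + 1)).hom :=
    (ShortComplex.ShortExact.moduleCat_exact_iff_function_exact _).1
      (ShortComplex.exact_of_f_is_kernel
        (ShortComplex.mk ((P.complex.linearYonedaObj R Y).iCycles n)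
          ((P.complex.linearYonedaObj R Y).d n (n + 1))
          ((P.complex.linearYonedaObj R Y).iCycles_d _ _))
        ((P.complex.linearYonedaObj R Y).cyclesIsKernel n (n + 1) (by simp)))
  exact (h f).1 hf

/-- The class in `Ext X Y n` of a cocycle of `Hom(P, Y)`. -/
def cyclesToExt : (P.complex.linearYonedaObj R Y).cycles n →ₗ[R] Abelian.Ext X Y n where
  toFun z := P.extMk (P.cyclesHom Y n z) (n + 1) rfl (P.d_comp_cyclesHom Y n z)
  map_add' z w := by rw [add_extMk]; congr 1; simp
  map_smul' r z := by rw [RingHom.id_apply, smul_extMk]; congr 1; simp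

lemma cyclesToExt_toCycles {m : ℕ} (g : (P.complex.linearYonedaObj R Y).X m) :
    P.cyclesToExt Y n ((P.complex.linearYonedaObj R Y).toCycles m n g) = 0 := by
  by_cases h : m + 1 = n
  · refine (P.extMk_eq_zero_iff _ (n + 1) rfl (P.d_comp_cyclesHom Y n _) m h).2 ⟨g, ?_⟩
    exact congr($((P.complex.linearYonedaObj R Y).toCycles_i m n) g).symm
  · rw [HomologicalComplex.toCycles_eq_zero _ (by simpa using h)]
    simp

lemma homologyπ_eq_zero_of_cyclesToExt_eq_zero (z : (P.complex.linearYonedaObj R Y).cycles n)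
    (hz : P.cyclesToExt Y n z = 0) : (P.complex.linearYonedaObj R Y).homologyπ n z = 0 := by
  have hi : Function.Injective ((P.complex.linearYonedaObj R Y).iCycles n) :=
    (ModuleCat.mono_iff_injective _).1 inferInstance
  rcases n with _ | n
  · have h0 : P.cyclesHom Y 0 z = 0 := P.hom_eq_zero_of_extMk_eq_zero Y _ 1 rfl
      (P.d_comp_cyclesHom Y 0 z) hz
    have : z = 0 := hi (h0.trans (map_zero _).symm)
    rw [this, map_zero]
  · obtain ⟨g, hg⟩ := (P.extMk_eq_zero_iff _ (n + 1 + 1) rfl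
      (P.d_comp_cyclesHom Y (n + 1) _) n rfl).1 hz
    have : z = (P.complex.linearYonedaObj R Y).toCycles n (n + 1) g := by
      apply hi
      exact hg.symm.trans congr($((P.complex.linearYonedaObj R Y).toCycles_i n (n + 1)) g).symm
    rw [this]
    exact congr($((P.complex.linearYonedaObj R Y).toCycles_comp_homologyπ n (n + 1)) g)

lemma cyclesToExt_surjective : Function.Surjective (P.cyclesToExt Y n) := fun α ↦ by
  obtain ⟨f, hf, rfl⟩ := P.extMk_surjective α (n + 1) rfl
  obtain ⟨z, rfl⟩ := P.exists_cyclesHom_eq Y n f hf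
  exact ⟨z, rfl⟩

lemma homologyπ_surjective :
    Function.Surjective ((P.complex.linearYonedaObj R Y).homologyπ n) :=
  (ModuleCat.epi_iff_surjective _).1 inferInstance

lemma ker_homologyπ :
    LinearMap.ker ((P.complex.linearYonedaObj R Y).homologyπ n).hom =
      LinearMap.ker (P.cyclesToExt Y n) := by
  ext z
  refine ⟨fun hz ↦ ?_, P.homologyπ_eq_zero_of_cyclesToExt_eq_zero Y n z⟩
  have hex : Function.Exact ((P.complex.linearYonedaObj R Y).toCycles
        ((ComplexShape.up ℕ).prev n) n).hom ((P.complex.linearYonedaObj R Y).homologyπ n).hom :=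
    (ShortComplex.ShortExact.moduleCat_exact_iff_function_exact _).1
     (ShortComplex.exact_of_g_is_cokernel (ShortComplex.mk
       ((P.complex.linearYonedaObj R Y).toCycles ((ComplexShape.up ℕ).prev n) n)
       ((P.complex.linearYonedaObj R Y).homologyπ n)
       ((P.complex.linearYonedaObj R Y).toCycles_comp_homologyπ _ _))
       ((P.complex.linearYonedaObj R Y).homologyIsCokernel _ n rfl))
  obtain ⟨g, rfl⟩ := (hex z).1 hz
  exact P.cyclesToExt_toCycles Y n g

/-- The cohomology of `Hom(P, Y)` is `Ext X Y n`. -/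
def homologyEquivExt :
    (P.complex.linearYonedaObj R Y).homology n ≃ₗ[R] Abelian.Ext X Y n :=
  (LinearMap.quotKerEquivOfSurjective _ (P.homologyπ_surjective Y n)).symm ≪≫ₗ
    Submodule.quotEquivOfEq _ _ (P.ker_homologyπ Y n) ≪≫ₗ
    LinearMap.quotKerEquivOfSurjective _ (P.cyclesToExt_surjective Y n)

lemma homologyEquivExt_homologyπ (z : (P.complex.linearYonedaObj R Y).cycles n) :
    P.homologyEquivExt Y n ((P.complex.linearYonedaObj R Y).homologyπ n z) =
      P.cyclesToExt Y n z := by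
  have : (LinearMap.quotKerEquivOfSurjective _ (P.homologyπ_surjective Y n)).symm
    ((P.complex.linearYonedaObj R Y).homologyπ n z) = Submodule.Quotient.mk z :=
    (LinearEquiv.symm_apply_eq _).2 rfl
  simp only [homologyEquivExt, LinearEquiv.trans_apply]
  erw [this]
  rfl

end CategoryTheory.ProjectiveResolution

lemma CategoryTheory.Iso.comp_inv_eq_comp_inv_comp {C : Type*} [Category* C]
    {A B B' D E E' : C} {a : A ⟶ B} {p : B ⟶ D} {q : A ⟶ B'} {r : B' ⟶ D}
    (h1 : a ≫ p = q ≫ r) {i : E ≅ D} {i' : E' ≅ B'} {m : E' ⟶ E}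
    (h2 : i'.hom ≫ r = m ≫ i.hom) : a ≫ p ≫ i.inv = (q ≫ i'.inv) ≫ m := by
  rw [reassoc_of% h1, Category.assoc]
  congr 1
  rw [Iso.comp_inv_eq, Category.assoc, Iso.eq_inv_comp]
  exact h2

namespace CategoryTheory.ProjectiveResolution
variable {R : Type u} [CommRing R] {X X' : ModuleCat.{u} R} {P : ProjectiveResolution X}
  {P' : ProjectiveResolution X'} {g : X ⟶ X'} (φ : Hom P P' g) (Y : ModuleCat.{u} R) (n : ℕ)

/-- The morphism of complexes `Hom(P', Y) ⟶ Hom(P, Y)`. -/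
def Hom.linearYonedaMap :
    P'.complex.linearYonedaObj R Y ⟶ P.complex.linearYonedaObj R Y :=
  (HomologicalComplex.unopFunctor _ _).map
    (((((linearYoneda R (ModuleCat.{u} R)).obj Y).rightOp.mapHomologicalComplex _).map φ.hom).op)

lemma isoExt_hom_naturality :
    ((Ext R (ModuleCat.{u} R) n).map g.op).app Y ≫ (P.isoExt n Y).hom =
      (P'.isoExt n Y).hom ≫ HomologicalComplex.homologyMap (φ.linearYonedaMap Y) n := by
  let F := ((linearYoneda R (ModuleCat.{u} R)).obj Y).rightOp
  let F' := F.mapHomologicalComplex (ComplexShape.down ℕ)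
  have h1 : (((Ext R (ModuleCat.{u} R) n).map g.op).app Y) ≫
      (P.isoLeftDerivedObj F n).inv.unop = (P'.isoLeftDerivedObj F n).inv.unop ≫
        (HomologicalComplex.homologyMap (F'.map φ.hom) n).unop :=
    congr($(isoLeftDerivedObj_inv_naturality g P P' φ.hom
      (φ.hom_f_zero_comp_π_f_zero.trans (by simp)) F n).unop)
  have h2 : (HomologicalComplex.homologyUnop (F'.obj P'.complex) n).hom ≫
      (HomologicalComplex.homologyMap (F'.map φ.hom) n).unop =
        HomologicalComplex.homologyMap (φ.linearYonedaMap Y) n ≫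
          (HomologicalComplex.homologyUnop (F'.obj P.complex) n).hom :=
    congr($(HomologicalComplex.homologyOp_hom_naturality (φ.linearYonedaMap Y) n).unop)
  exact CategoryTheory.Iso.comp_inv_eq_comp_inv_comp h1 h2

/-- The functor `Ext R _ n` agrees with `Abelian.Ext`. -/
def extLinearEquiv (X Y : ModuleCat.{u} R) (n : ℕ) :
    ((Ext R (ModuleCat.{u} R) n).obj (Opposite.op X)).obj Y ≃ₗ[R] Abelian.Ext X Y n :=
  ((projectiveResolution X).isoExt n Y).toLinearEquiv ≪≫ₗ
    (projectiveResolution X).homologyEquivExt Y n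

lemma homologyEquivExt_naturality (z : (P'.complex.linearYonedaObj R Y).homology n) :
    P.homologyEquivExt Y n (HomologicalComplex.homologyMap (φ.linearYonedaMap Y) n z) =
      (Abelian.Ext.mk₀ g).comp (P'.homologyEquivExt Y n z) (zero_add n) := by
  obtain ⟨z, rfl⟩ := P'.homologyπ_surjective Y n z
  have h1 := congr($(HomologicalComplex.homologyπ_naturality (φ.linearYonedaMap Y) n) z)
  simp only [ModuleCat.comp_apply] at h1
  rw [h1, homologyEquivExt_homologyπ, homologyEquivExt_homologyπ]
  refine Eq.trans ?_ (mk₀_comp_extMk (P'.cyclesHom Y n z) (n + 1) rfl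
    (P'.d_comp_cyclesHom Y n z) φ).symm
  have h2 := congr($(HomologicalComplex.cyclesMap_i (φ.linearYonedaMap Y) n) z)
  simp only [cyclesToExt, LinearMap.coe_mk, AddHom.coe_mk]
  congr 1

lemma extLinearEquiv_map {X X' : ModuleCat.{u} R} (g : X ⟶ X') (Y : ModuleCat.{u} R) (n : ℕ)
    (z : ((Ext R (ModuleCat.{u} R) n).obj (Opposite.op X')).obj Y) :
    extLinearEquiv X Y n (((Ext R (ModuleCat.{u} R) n).map g.op).app Y z) =
      (Abelian.Ext.mk₀ g).comp (extLinearEquiv X' Y n z) (zero_add n) := by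
  let φ : Hom (projectiveResolution X) (projectiveResolution X') g :=
    { hom := lift g _ _
      hom_f_zero_comp_π_f_zero := (lift_commutes_zero g _ _).trans (by simp) }
  have h := congr($(isoExt_hom_naturality φ Y n) z)
  simp only [ModuleCat.comp_apply] at h
  simp only [extLinearEquiv, LinearEquiv.trans_apply]
  rw [← homologyEquivExt_naturality φ]
  exact congrArg _ h

end CategoryTheory.ProjectiveResolution

end

noncomputable section

open Limits

namespace ModuleCat
variable {R : Type u} [CommRing R]

/-- The cyclic module `R ⧸ I`. -/
abbrev cyclic (I : Ideal R) : ModuleCat.{u} R := ModuleCat.of R (R ⧸ I)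

/-- The projection `R ⧸ I ⟶ R ⧸ J` for `I ≤ J`. -/
def cyclicMap {I J : Ideal R} (h : I ≤ J) : cyclic I ⟶ cyclic J :=
  ModuleCat.ofHom (Submodule.mapQ I J LinearMap.id h)

@[simp]
lemma cyclicMap_comp {I J K : Ideal R} (h : I ≤ J) (h' : J ≤ K) :
    cyclicMap h ≫ cyclicMap h' = cyclicMap (h.trans h') := by
  ext
  rfl

/-- The restriction map `Ext^i(R/J, M) → Ext^i(R/I, M)` for `I ≤ J`. -/
def extRes {I J : Ideal R} (h : I ≤ J) (M : ModuleCat.{u} R) (i : ℕ) :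
    Abelian.Ext (cyclic J) M i →ₗ[R] Abelian.Ext (cyclic I) M i :=
  (Abelian.Ext.mk₀ (cyclicMap h)).precompOfLinear R M (zero_add i)

lemma extRes_apply {I J : Ideal R} (h : I ≤ J) (M : ModuleCat.{u} R) (i : ℕ)
    (x : Abelian.Ext (cyclic J) M i) :
    extRes h M i x = (Abelian.Ext.mk₀ (cyclicMap h)).comp x (zero_add i) := rfl

lemma extRes_extRes {I J K : Ideal R} (h : I ≤ J) (h' : J ≤ K) (M : ModuleCat.{u} R) (i : ℕ)
    (x : Abelian.Ext (cyclic K) M i) :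
    extRes h M i (extRes h' M i x) = extRes (h.trans h') M i x := by
  simp [extRes_apply]

lemma extRes_comp {I J : Ideal R} (h : I ≤ J) {M M' : ModuleCat.{u} R} {i j k : ℕ}
    (x : Abelian.Ext (cyclic J) M i) (y : Abelian.Ext M M' j) (hk : i + j = k) :
    extRes h M' k (x.comp y hk) = (extRes h M i x).comp y hk := by
  rw [extRes_apply, extRes_apply, Abelian.Ext.comp_assoc _ _ _ (zero_add i) hk (by lia)]

/-- `H` is a colimit of the modules `Ext^i(R/𝔟^t, M)`. -/
structure ExtColim (𝔟 : Ideal R) (M : ModuleCat.{u} R) (i : ℕ) (H : Type u) [AddCommGroup H]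
    [Module R H] where
  /-- The structure maps. -/
  ι : ∀ t : ℕ, Abelian.Ext (cyclic (𝔟 ^ t)) M i →ₗ[R] H
  ι_extRes : ∀ {s t : ℕ} (h : s ≤ t) (x : Abelian.Ext (cyclic (𝔟 ^ s)) M i),
    ι t (extRes (Ideal.pow_le_pow_right h) M i x) = ι s x
  exists_ι_eq : ∀ y : H, ∃ t x, ι t x = y
  exists_extRes_eq_zero : ∀ (t : ℕ) (x : Abelian.Ext (cyclic (𝔟 ^ t)) M i), ι t x = 0 →
    ∃ (t' : ℕ) (h : t ≤ t'), extRes (Ideal.pow_le_pow_right h) M i x = 0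

namespace ExtColim
variable {𝔟 : Ideal R} {M : ModuleCat.{u} R} {i : ℕ} {H H' : Type u} [AddCommGroup H]
    [Module R H] [AddCommGroup H'] [Module R H'] (c : ExtColim 𝔟 M i H) (c' : ExtColim 𝔟 M i H')

include c' in
lemma ι_eq_of_ι_eq {s t : ℕ} {x : Abelian.Ext (cyclic (𝔟 ^ s)) M i}
    {y : Abelian.Ext (cyclic (𝔟 ^ t)) M i} (h : c.ι s x = c.ι t y) : c'.ι s x = c'.ι t y := by
  have hs : s ≤ s + t := by lia
  have ht : t ≤ s + t := by lia
  rw [← c.ι_extRes hs, ← c.ι_extRes ht, ← sub_eq_zero, ← map_sub] at h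
  obtain ⟨t', h', h⟩ := c.exists_extRes_eq_zero _ _ h
  rw [← c'.ι_extRes hs, ← c'.ι_extRes ht, ← sub_eq_zero, ← map_sub, ← c'.ι_extRes h', h, map_zero]

/-- The comparison map between two colimits. -/
def desc : H →ₗ[R] H' where
  toFun y := c'.ι _ (c.exists_ι_eq y).choose_spec.choose
  map_add' y y' := by
    rw [← c'.ι_extRes (Nat.le_add_right (c.exists_ι_eq y).choose (c.exists_ι_eq y').choose),
      ← c'.ι_extRes (Nat.le_add_left (c.exists_ι_eq y').choose (c.exists_ι_eq y).choose), ← map_add]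
    refine c.ι_eq_of_ι_eq c' ?_
    rw [map_add, c.ι_extRes, c.ι_extRes, (c.exists_ι_eq y).choose_spec.choose_spec,
      (c.exists_ι_eq y').choose_spec.choose_spec,
      (c.exists_ι_eq (y + y')).choose_spec.choose_spec] <;> lia
  map_smul' r y := by
    rw [RingHom.id_apply, ← map_smul]
    refine c.ι_eq_of_ι_eq c' ?_
    rw [map_smul, (c.exists_ι_eq y).choose_spec.choose_spec,
      (c.exists_ι_eq (r • y)).choose_spec.choose_spec]

lemma desc_ι (t : ℕ) (x : Abelian.Ext (cyclic (𝔟 ^ t)) M i) : c.desc c' (c.ι t x) = c'.ι t x :=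
  c.ι_eq_of_ι_eq c' (c.exists_ι_eq (c.ι t x)).choose_spec.choose_spec

/-- Two colimits are isomorphic. -/
def equiv : H ≃ₗ[R] H' :=
  LinearEquiv.ofLinearMap (c.desc c') (c'.desc c)
    (by ext y; obtain ⟨t, x, rfl⟩ := c'.exists_ι_eq y; simp [desc_ι])
    (by ext y; obtain ⟨t, x, rfl⟩ := c.exists_ι_eq y; simp [desc_ι])

end ExtColim

open ProjectiveResolution in
/-- Local cohomology is a colimit of the modules `Ext^i(R/𝔟^t, M)`. -/
def extColimLocalCohomology (𝔟 : Ideal R) (M : ModuleCat.{u} R) (i : ℕ) :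
    ExtColim 𝔟 M i ((localCohomology 𝔟 i).obj M) := by
  let D := localCohomology.diagram (localCohomology.idealPowersDiagram 𝔟) i
  let F := D ⋙ (evaluation (ModuleCat.{u} R) (ModuleCat.{u} R)).obj M
  have : HasColimit D := inferInstance
  let hc := isColimitOfPreserves ((evaluation (ModuleCat.{u} R) (ModuleCat.{u} R)).obj M)
    (colimit.isColimit D)
  let ιF (t : ℕ) : ((Ext R (ModuleCat.{u} R) i).obj (Opposite.op (cyclic (𝔟 ^ t)))).obj M ⟶
      (localCohomology 𝔟 i).obj M := (colimit.ι D (.op (.op t))).app M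
  have hι {s t : ℕ} (h : s ≤ t) : ((Ext R (ModuleCat.{u} R) i).map
      (cyclicMap (Ideal.pow_le_pow_right (I := 𝔟) h)).op).app M ≫ ιF t = ιF s :=
    congr($(colimit.w D (homOfLE h).op.op).app M)
  have : PreservesFilteredColimitsOfSize.{0, 0} (forget (ModuleCat.{u} R)) :=
    preservesFilteredColimitsOfSize_shrink.{0, u, 0, u} _
  refine ⟨fun t ↦ (ιF t).hom ∘ₗ (extLinearEquiv (cyclic (𝔟 ^ t)) M i).symm.toLinearMap,
    fun {s t} h x ↦ ?_, fun y ↦ ?_, fun t x hx ↦ ?_⟩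
  · obtain ⟨x, rfl⟩ := (extLinearEquiv (cyclic (𝔟 ^ s)) M i).surjective x
    rw [extRes_apply, ← extLinearEquiv_map]
    simp only [LinearMap.comp_apply, LinearEquiv.coe_coe, LinearEquiv.symm_apply_apply]
    exact congr($(hι h) x)
  · obtain ⟨t, x, rfl⟩ := Concrete.isColimit_exists_rep F hc y
    refine ⟨t.unop.unop, extLinearEquiv (cyclic (𝔟 ^ t.unop.unop)) M i x, ?_⟩
    exact congrArg (ιF t.unop.unop) ((extLinearEquiv _ M i).symm_apply_apply x)
  · obtain ⟨x, rfl⟩ := (extLinearEquiv (cyclic (𝔟 ^ t)) M i).surjective x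
    simp only [LinearMap.comp_apply, LinearEquiv.coe_coe, LinearEquiv.symm_apply_apply] at hx
    obtain ⟨k, f, g, h⟩ := Concrete.isColimit_exists_of_rep_eq F hc
      (i := .op (.op t)) (j := .op (.op t)) x 0 (hx.trans (map_zero _).symm)
    have hk : t ≤ k.unop.unop := leOfHom f.unop.unop
    refine ⟨k.unop.unop, hk, ?_⟩
    rw [extRes_apply, ← extLinearEquiv_map]
    rw [LinearEquiv.map_eq_zero_iff]
    exact h.trans (map_zero _)

end ModuleCat

namespace ModuleCat
variable {R : Type u} [CommRing R]

/-- A class of modules that contains zero and is closed under submodules, quotients and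
extensions. -/
structure IsSerre (P : ModuleCat.{u} R → Prop) : Prop where
  zero : P (of R PUnit.{u + 1})
  middle : ∀ {A B C : Type u} [AddCommGroup A] [AddCommGroup B] [AddCommGroup C] [Module R A]
    [Module R B] [Module R C] (f : A →ₗ[R] B) (g : B →ₗ[R] C), Function.Exact f g →
    P (of R A) → P (of R C) → P (of R B)

lemma isSerre_finite [IsNoetherianRing R] :
    IsSerre fun X : ModuleCat.{u} R ↦ Module.Finite R X where
  zero := inferInstanceAs (Module.Finite R PUnit.{u + 1})
  middle {A B C} _ _ _ _ _ _ f g hfg hA hC := by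
    have hA : Module.Finite R A := hA
    have hC : Module.Finite R C := hC
    have : IsNoetherian R A := isNoetherian_of_isNoetherianRing_of_finite R A
    have : IsNoetherian R C := isNoetherian_of_isNoetherianRing_of_finite R C
    have := isNoetherian_of_range_eq_ker f g hfg.linearMap_ker_eq.symm
    change Module.Finite R B
    infer_instance

variable {P : ModuleCat.{u} R → Prop} (hP : IsSerre P) {A B C : Type u} [AddCommGroup A]
  [AddCommGroup B] [AddCommGroup C] [Module R A] [Module R B] [Module R C]

namespace IsSerre
include hP

lemma of_injective (f : A →ₗ[R] B) (hf : Function.Injective f) (h : P (of R B)) : P (of R A) :=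
  hP.middle (0 : PUnit.{u + 1} →ₗ[R] A) f (by
    rw [LinearMap.exact_iff, LinearMap.ker_eq_bot.2 hf, LinearMap.range_zero]) hP.zero h

lemma of_surjective (f : A →ₗ[R] B) (hf : Function.Surjective f) (h : P (of R A)) : P (of R B) :=
  hP.middle f (0 : B →ₗ[R] PUnit.{u + 1}) (by
    rw [LinearMap.exact_iff, LinearMap.range_eq_top.2 hf, LinearMap.ker_zero]) h hP.zero

lemma of_equiv (f : A ≃ₗ[R] B) (h : P (of R A)) : P (of R B) :=
  hP.of_surjective f.toLinearMap f.surjective h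

lemma of_subsingleton [Subsingleton A] : P (of R A) :=
  hP.of_injective (0 : A →ₗ[R] PUnit.{u + 1}) (Function.injective_of_subsingleton _) hP.zero

end IsSerre

/-- The short complex `A ⟶ B ⟶ C` of modules attached to an exact pair of linear maps. -/
abbrev shortComplexOfExact {f : A →ₗ[R] B} {g : B →ₗ[R] C} (h : Function.Exact f g) :
    ShortComplex (ModuleCat.{u} R) :=
  shortComplexOfCompEqZero f g h.linearMap_comp_eq_zero

lemma shortExact_of_exact {f : A →ₗ[R] B} {g : B →ₗ[R] C} (h : Function.Exact f g)
    (hf : Function.Injective f) (hg : Function.Surjective g) :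
    (shortComplexOfExact h).ShortExact :=
  shortComplex_shortExact _ h hf hg

open Abelian

/-- The module `Ext^i(N, X)` belongs to the class `P`. -/
def ExtIn (P : ModuleCat.{u} R → Prop) (N : Type u) [AddCommGroup N] [Module R N] (X : Type u)
    [AddCommGroup X] [Module R X] (i : ℕ) : Prop :=
  P (of R (Ext (of R N) (of R X) i))

namespace IsSerre
variable {N : Type u} [AddCommGroup N] [Module R N]
include hP

omit hP in
lemma extIn_zero_iff (hP : IsSerre P) : ExtIn P N A 0 ↔ P (of R (N →ₗ[R] A)) :=
  ⟨hP.of_equiv (Ext.linearEquiv₀.trans ModuleCat.homLinearEquiv),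
    hP.of_equiv (Ext.linearEquiv₀.trans ModuleCat.homLinearEquiv).symm⟩

lemma extIn_of_equiv (e : A ≃ₗ[R] B) {i : ℕ} (h : ExtIn P N A i) : ExtIn P N B i := by
  refine hP.of_surjective ((Ext.mk₀ (ofHom e.toLinearMap)).postcompOfLinear R (of R N)
    (add_zero i)) (fun x ↦ ⟨x.comp (Ext.mk₀ (ofHom e.symm.toLinearMap)) (add_zero i), ?_⟩) h
  have : ofHom e.symm.toLinearMap ≫ ofHom e.toLinearMap = 𝟙 (of R B) := by ext; simp
  change (x.comp _ (add_zero i)).comp _ (add_zero i) = x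
  simp [this]

lemma extIn_of_equiv_left (e : A ≃ₗ[R] B) {i : ℕ} (h : ExtIn P A N i) : ExtIn P B N i := by
  refine hP.of_surjective ((Ext.mk₀ (ofHom e.symm.toLinearMap)).precompOfLinear R (of R N)
    (zero_add i)) (fun x ↦ ⟨(Ext.mk₀ (ofHom e.toLinearMap)).comp x (zero_add i), ?_⟩) h
  have : ofHom e.symm.toLinearMap ≫ ofHom e.toLinearMap = 𝟙 (of R B) := by ext; simp
  change (Ext.mk₀ _).comp ((Ext.mk₀ _).comp x (zero_add i)) (zero_add i) = x
  simp [this]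

lemma extIn_zero_of_injective (f : A →ₗ[R] B) (hf : Function.Injective f) (h : ExtIn P N B 0) :
    ExtIn P N A 0 := by
  rw [hP.extIn_zero_iff] at h ⊢
  exact hP.of_injective (LinearMap.compRight R f) (fun x y hxy ↦ by
    ext z
    exact hf congr($hxy z)) h

lemma extIn_zero_of_surjective (f : A →ₗ[R] B) (hf : Function.Surjective f)
    (h : ExtIn P A N 0) : ExtIn P B N 0 := by
  rw [hP.extIn_zero_iff] at h ⊢
  exact hP.of_injective (LinearMap.lcomp R N f) (fun x y hxy ↦ by
    ext z
    obtain ⟨z, rfl⟩ := hf z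
    exact congr($hxy z)) h

variable {f : A →ₗ[R] B} {g : B →ₗ[R] C} (hfg : Function.Exact f g)
  (hf : Function.Injective f) (hg : Function.Surjective g) {i : ℕ}
include hfg hf hg

lemma extIn_middle (h : ExtIn P N A i) (h' : ExtIn P N C i) : ExtIn P N B i := by
  have hS := shortExact_of_exact hfg hf hg
  refine hP.middle ((Ext.mk₀ (ofHom f)).postcompOfLinear R (of R N) (add_zero i))
    ((Ext.mk₀ (ofHom g)).postcompOfLinear R (of R N) (add_zero i)) (fun x ↦ ⟨?_, ?_⟩) h h'
  · exact Ext.covariant_sequence_exact₂ (of R N) hS x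
  · rintro ⟨x, rfl⟩
    change (x.comp _ (add_zero i)).comp _ (add_zero i) = 0
    have : ofHom f ≫ ofHom g = 0 := (shortComplexOfExact hfg).zero
    simp [this]

lemma extIn_right (h : ExtIn P N B i) (h' : ExtIn P N A (i + 1)) : ExtIn P N C i := by
  have hS := shortExact_of_exact hfg hf hg
  refine hP.middle ((Ext.mk₀ (ofHom g)).postcompOfLinear R (of R N) (add_zero i))
    (hS.extClass.postcompOfLinear R (of R N) (rfl : i + 1 = i + 1)) (fun x ↦ ⟨?_, ?_⟩) h h'
  · exact Ext.covariant_sequence_exact₃ (of R N) hS x rfl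
  · rintro ⟨x, rfl⟩
    have := hS.comp_extClass
    change (x.comp _ (add_zero i)).comp _ (rfl : i + 1 = i + 1) = 0
    rw [Ext.comp_assoc_of_second_deg_zero, this, Ext.comp_zero]

lemma extIn_left (h : ExtIn P N B (i + 1)) (h' : ExtIn P N C i) : ExtIn P N A (i + 1) := by
  have hS := shortExact_of_exact hfg hf hg
  refine hP.middle (hS.extClass.postcompOfLinear R (of R N) (rfl : i + 1 = i + 1))
    ((Ext.mk₀ (ofHom f)).postcompOfLinear R (of R N) (add_zero (i + 1))) (fun x ↦ ⟨?_, ?_⟩) h' h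
  · exact fun h ↦ Ext.covariant_sequence_exact₁ (of R N) hS x h rfl
  · rintro ⟨x, rfl⟩
    have := hS.extClass_comp
    change (x.comp _ (rfl : i + 1 = i + 1)).comp _ (add_zero (i + 1)) = 0
    rw [Ext.comp_assoc_of_third_deg_zero, this, Ext.comp_zero]

lemma extIn_contra_middle (h : ExtIn P A N i) (h' : ExtIn P C N i) : ExtIn P B N i := by
  have hS := shortExact_of_exact hfg hf hg
  refine hP.middle ((Ext.mk₀ (ofHom g)).precompOfLinear R (of R N) (zero_add i))
    ((Ext.mk₀ (ofHom f)).precompOfLinear R (of R N) (zero_add i)) (fun x ↦ ⟨?_, ?_⟩) h' h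
  · exact Ext.contravariant_sequence_exact₂ hS (of R N) x
  · rintro ⟨x, rfl⟩
    change (Ext.mk₀ _).comp ((Ext.mk₀ _).comp x (zero_add i)) (zero_add i) = 0
    have : ofHom f ≫ ofHom g = 0 := (shortComplexOfExact hfg).zero
    simp [this]

lemma extIn_contra_right (h : ExtIn P B N (i + 1)) (h' : ExtIn P A N i) :
    ExtIn P C N (i + 1) := by
  have hS := shortExact_of_exact hfg hf hg
  refine hP.middle (hS.extClass.precompOfLinear R (of R N) (add_comm 1 i))
    ((Ext.mk₀ (ofHom g)).precompOfLinear R (of R N) (zero_add (i + 1))) (fun x ↦ ⟨?_, ?_⟩) h' h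
  · exact fun h ↦ Ext.contravariant_sequence_exact₃ hS (of R N) x h (add_comm 1 i)
  · rintro ⟨x, rfl⟩
    have := hS.comp_extClass
    change (Ext.mk₀ _).comp (hS.extClass.comp x (add_comm 1 i)) (zero_add (i + 1)) = 0
    rw [← Ext.comp_assoc _ _ _ (zero_add 1) (add_comm 1 i) (by lia)]
    erw [this]
    rw [Ext.zero_comp]

end IsSerre

end ModuleCat

namespace ModuleCat
variable {R : Type u} [CommRing R]

open Abelian

lemma subsingleton_ext_of_subsingleton_left {N : Type u} [AddCommGroup N] [Module R N]
    [Subsingleton N] (X : ModuleCat.{u} R) (i : ℕ) : Subsingleton (Ext (of R N) X i) := by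
  refine subsingleton_of_forall_eq 0 fun x ↦ ?_
  have : 𝟙 (of R N) = 0 := by ext x; exact Subsingleton.elim _ _
  rw [← Ext.mk₀_id_comp x, this, Ext.mk₀_zero, Ext.zero_comp]

namespace IsSerre
variable {P : ModuleCat.{u} R → Prop} (hP : IsSerre P) {M : Type u} [AddCommGroup M] [Module R M]
include hP

lemma extIn_pi {N : Type u} [AddCommGroup N] [Module R N] {i : ℕ} (h : ExtIn P N M i) (n : ℕ) :
    ExtIn P (Fin n → N) M i := by
  induction n with
  | zero =>
    have := subsingleton_ext_of_subsingleton_left (N := Fin 0 → N) (of R M) i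
    exact hP.of_subsingleton
  | succ n ih =>
    exact hP.extIn_of_equiv_left (Fin.consLinearEquiv R fun _ : Fin (n + 1) ↦ N)
      (hP.extIn_contra_middle (f := LinearMap.inl R N (Fin n → N)) (g := LinearMap.snd R _ _)
        .inl_snd LinearMap.inl_injective LinearMap.snd_surjective h ih)

omit hP in
lemma exists_surjective_pi {𝔞 : Ideal R} (N : Type u) [AddCommGroup N] [Module R N]
    [Module.Finite R N] (hN : ∀ a ∈ 𝔞, ∀ x : N, a • x = 0) :
    ∃ (n : ℕ) (f : (Fin n → R ⧸ 𝔞) →ₗ[R] N), Function.Surjective f := by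
  obtain ⟨n, s, hs⟩ := Module.Finite.exists_fin (R := R) (M := N)
  let q (i : Fin n) : (R ⧸ 𝔞) →ₗ[R] N :=
    Submodule.liftQ 𝔞 (LinearMap.toSpanSingleton R N (s i)) fun a ha ↦ by simp [hN a ha]
  refine ⟨n, LinearMap.lsum R _ R q, ?_⟩
  rw [← LinearMap.range_eq_top, eq_top_iff, ← hs, Submodule.span_le]
  rintro _ ⟨i, rfl⟩
  refine ⟨Pi.single i (Submodule.Quotient.mk 1), ?_⟩
  rw [LinearMap.lsum_piSingle]
  exact one_smul R (s i)

lemma extIn_of_finite [IsNoetherianRing R] {𝔞 : Ideal R} (h : ∀ i, ExtIn P (R ⧸ 𝔞) M i) (i : ℕ) :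
    ∀ (N : Type u) [AddCommGroup N] [Module R N] [Module.Finite R N],
      (∀ a ∈ 𝔞, ∀ x : N, a • x = 0) → ExtIn P N M i := by
  induction i with
  | zero =>
    intro N _ _ _ hN
    obtain ⟨n, f, hf⟩ := exists_surjective_pi N hN
    exact hP.extIn_zero_of_surjective f hf (hP.extIn_pi (h 0) n)
  | succ i ih =>
    intro N _ _ _ hN
    obtain ⟨n, f, hf⟩ := exists_surjective_pi N hN
    refine hP.extIn_contra_right f.exact_subtype_ker_map (Submodule.subtype_injective _) hf
      (hP.extIn_pi (h _) n) (ih _ fun a ha x ↦ ?_)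
    ext j
    obtain ⟨r, hr⟩ := Submodule.mkQ_surjective 𝔞 (x.1 j)
    simp only [SetLike.val_smul, Pi.smul_apply, ZeroMemClass.coe_zero, Pi.zero_apply, ← hr]
    rw [← map_smul, Submodule.mkQ_apply, Submodule.Quotient.mk_eq_zero]
    exact 𝔞.mul_mem_right _ ha

lemma extIn_of_mem [IsNoetherianRing R] (N : Type u) [AddCommGroup N] [Module R N]
    [Module.Finite R N] (h : P (of R M)) (i : ℕ) : ExtIn P N M i := by
  refine hP.extIn_of_finite (𝔞 := ⊥) (fun i ↦ ?_) i N (by simp)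
  refine hP.extIn_of_equiv_left (Submodule.quotEquivOfEqBot ⊥ rfl).symm ?_
  cases i with
  | zero =>
    rw [hP.extIn_zero_iff]
    exact hP.of_equiv (LinearMap.ringLmapEquivSelf R R M).symm h
  | succ i =>
    have : Projective (of R R) := (IsProjective.iff_projective R).1 inferInstance
    have : Subsingleton (Ext (of R R) (of R M) (i + 1)) :=
      subsingleton_of_forall_eq 0 Ext.eq_zero_of_projective
    exact hP.of_subsingleton

end IsSerre

end ModuleCat

end

noncomputable section

open Limits Submodule

section Torsion
variable {R : Type u} [CommRing R]

/-- The map `torsionBy x A → torsionBy x B` induced by a linear map `A → B`. -/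
def torsionByMap (x : R) {A B : Type u} [AddCommGroup A] [AddCommGroup B] [Module R A] [Module R B]
    (f : A →ₗ[R] B) : torsionBy R A x →ₗ[R] torsionBy R B x :=
  f.restrict fun a ha ↦ by
    rw [mem_torsionBy_iff] at ha ⊢
    rw [← map_smul, ha, map_zero]

/-- The inclusion of the iterated torsion submodule. -/
def torsionByConsMap (x : R) (l : List R) (A : Type u) [AddCommGroup A] [Module R A] :
    torsionBySet R (torsionBy R A x) {y | y ∈ l} →ₗ[R] torsionBySet R A {y | y ∈ x :: l} :=
  LinearMap.codRestrict _ ((Submodule.subtype _) ∘ₗ (Submodule.subtype _)) fun a ↦ by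
    rw [mem_torsionBySet_iff]
    rintro ⟨y, hy⟩
    obtain rfl | hy := List.mem_cons.1 hy
    · exact a.1.2
    · exact congrArg Subtype.val ((mem_torsionBySet_iff _ _).1 a.2 ⟨y, hy⟩)

lemma torsionByConsMap_injective (x : R) (l : List R) (A : Type u) [AddCommGroup A] [Module R A] :
    Function.Injective (torsionByConsMap x l A) := fun _ _ h ↦
  Subtype.ext (Subtype.ext congr(($h : A)))

variable {A : Type u} [AddCommGroup A] [Module R A]

lemma exists_forall_eq_of_antitone {α : Type u} [PartialOrder α] [WellFoundedLT α]
    (F : ℕ → ℕ → α) (h₁ : ∀ k, Antitone (F · k)) (h₂ : ∀ n, Antitone (F n)) :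
    ∃ K, ∀ k ≥ K, ∀ n, F n k = F n K := by
  have key (G : ℕ → α) (hG : Antitone G) : ∃ k, ∀ m ≥ k, G m = G k := by
    obtain ⟨k, hk⟩ := WellFoundedGT.monotone_chain_condition (α := αᵒᵈ) ⟨G, hG⟩
    exact ⟨k, fun m hm ↦ (hk m hm).symm⟩
  obtain ⟨k₀, hk₀⟩ := key (fun k ↦ F k k) fun a b h ↦ (h₁ b h).trans (h₂ a h)
  choose κ hκ using fun n ↦ key (F n) (h₂ n)
  have hle {n : ℕ} (hn : n < k₀) : κ n ≤ (Finset.range k₀).sup κ :=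
    Finset.le_sup (Finset.mem_range.2 hn)
  refine ⟨max k₀ ((Finset.range k₀).sup κ), fun k hk n ↦ ?_⟩
  obtain hn | hn := lt_or_ge n k₀
  · rw [hκ n k ((hle hn).trans ((le_max_right _ _).trans hk)),
      hκ n _ ((hle hn).trans (le_max_right _ _))]
  · have aux (k) (hk : k₀ ≤ k) : F n k = F k₀ k₀ := by
      refine le_antisymm ((h₁ k hn).trans (h₂ _ hk)) ?_
      rw [← hk₀ (max n k) (hn.trans (le_max_left _ _))]
      exact (h₁ _ (le_max_left _ _)).trans (h₂ _ (le_max_right _ _))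
    rw [aux k ((le_max_left _ _).trans hk), aux _ (le_max_left _ _)]

lemma isArtinian_of_torsionBy (x : R) (h : ∀ a : A, ∃ n : ℕ, x ^ n • a = 0)
    [IsArtinian R (torsionBy R A x)] : IsArtinian R A := by
  rw [← monotone_stabilizes_iff_artinian]
  intro N
  let F (n k : ℕ) : Submodule R (torsionBy R A x) := comap (torsionBy R A x).subtype
    (map (LinearMap.lsmul R A (x ^ n)) ((OrderDual.ofDual (N k)) ⊓ torsionBy R A (x ^ (n + 1))))
  obtain ⟨K, hK⟩ := exists_forall_eq_of_antitone F
    (fun k ↦ antitone_nat_of_succ_le fun n ↦ by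
      rintro y ⟨a, ⟨ha, ha'⟩, hy⟩
      refine ⟨x • a, ⟨Submodule.smul_mem _ _ ha, ?_⟩, ?_⟩
      · change x ^ (n + 1) • x • a = 0
        rw [smul_smul, ← pow_succ]
        exact ha'
      · rw [← hy]
        change x ^ n • x • a = x ^ (n + 1) • a
        rw [smul_smul, ← pow_succ])
    (fun n k k' h ↦ comap_mono (map_mono (inf_le_inf_right _ (N.monotone h))))
  refine ⟨K, fun k hk ↦ le_antisymm (N.monotone hk) ?_⟩
  change OrderDual.ofDual (N K) ≤ OrderDual.ofDual (N k)
  suffices ∀ n : ℕ, ∀ a ∈ OrderDual.ofDual (N K), x ^ n • a = 0 → a ∈ OrderDual.ofDual (N k) by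
    intro a ha
    obtain ⟨n, hn⟩ := h a
    exact this n a ha hn
  intro n
  induction n with
  | zero => intro a _ ha; simp_all
  | succ n ih =>
    intro a ha hn
    have hT : x ^ n • a ∈ torsionBy R A x := by
      rw [mem_torsionBy_iff, smul_smul, ← pow_succ']
      exact hn
    have : (⟨x ^ n • a, hT⟩ : torsionBy R A x) ∈ F n K := ⟨a, ⟨ha, hn⟩, rfl⟩
    rw [← hK k hk n] at this
    obtain ⟨b, ⟨hb, -⟩, hab⟩ := this
    have hab : x ^ n • b = x ^ n • a := hab
    have h1 := ih (a - b) (sub_mem ha (N.monotone hk hb)) (by rw [smul_sub, hab, sub_self])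
    simpa using add_mem h1 hb

lemma isArtinian_of_torsionBySet (l : List R) : ∀ (A : Type u) [AddCommGroup A] [Module R A],
    (∀ x ∈ l, ∀ a : A, ∃ n : ℕ, x ^ n • a = 0) → IsArtinian R (torsionBySet R A {x | x ∈ l}) →
    IsArtinian R A := by
  induction l with
  | nil =>
    intro A _ _ _ _
    have : torsionBySet R A {x | x ∈ ([] : List R)} = ⊤ := by
      ext a
      simp
    exact isArtinian_of_linearEquiv
      (Submodule.topEquiv.symm.trans (LinearEquiv.ofEq _ _ this.symm)).symm
  | cons x l ih =>
    intro A _ _ h _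
    have := isArtinian_of_injective _ (torsionByConsMap_injective x l A)
    have := ih (torsionBy R A x) (fun y hy a ↦ by
      obtain ⟨n, hn⟩ := h y (List.mem_cons_of_mem _ hy) a
      exact ⟨n, Subtype.ext hn⟩) this
    exact isArtinian_of_torsionBy x (h x List.mem_cons_self)

lemma isNoetherian_of_torsionBy (x : R) (k : ℕ) : ∀ (A : Type u) [AddCommGroup A] [Module R A],
    (∀ a : A, x ^ k • a = 0) → IsNoetherian R (torsionBy R A x) → IsNoetherian R A := by
  induction k with
  | zero =>
    intro A _ _ h _
    have : Subsingleton A := subsingleton_of_forall_eq 0 fun a ↦ by simpa using h a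
    infer_instance
  | succ k ih =>
    intro A _ _ h _
    let g : A →ₗ[R] A := LinearMap.lsmul R A x
    have : IsNoetherian R (torsionBy R (LinearMap.range g) x) :=
      isNoetherian_of_injective (torsionByMap x (LinearMap.range g).subtype) fun a b h ↦
        Subtype.ext (Subtype.ext congr(($h : A)))
    have := ih (LinearMap.range g) (by
      rintro ⟨_, a, rfl⟩
      refine Subtype.ext ?_
      change x ^ k • x • a = 0
      rw [smul_smul, ← pow_succ, h]) this
    exact isNoetherian_of_range_eq_ker (torsionBy R A x).subtype g.rangeRestrict (by
      rw [range_subtype, LinearMap.ker_rangeRestrict]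
      rfl)

lemma isNoetherian_of_torsionBySet (l : List R) : ∀ (A : Type u) [AddCommGroup A] [Module R A],
    (∀ x ∈ l, ∃ n : ℕ, ∀ a : A, x ^ n • a = 0) →
    IsNoetherian R (torsionBySet R A {x | x ∈ l}) → IsNoetherian R A := by
  induction l with
  | nil =>
    intro A _ _ _ _
    have : torsionBySet R A {x | x ∈ ([] : List R)} = ⊤ := by
      ext a
      simp
    exact isNoetherian_of_linearEquiv
      (Submodule.topEquiv.symm.trans (LinearEquiv.ofEq _ _ this.symm)).symm
  | cons x l ih =>
    intro A _ _ h _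
    have := isNoetherian_of_injective _ (torsionByConsMap_injective x l A)
    have := ih (torsionBy R A x) (fun y hy ↦ by
      obtain ⟨n, hn⟩ := h y (List.mem_cons_of_mem _ hy)
      exact ⟨n, fun a ↦ Subtype.ext (hn a)⟩) this
    obtain ⟨k, hk⟩ := h x List.mem_cons_self
    exact isNoetherian_of_torsionBy x k A hk this

end Torsion

namespace ModuleCat
variable {R : Type u} [CommRing R]

/-- Artinian modules whose `x`-torsion belongs to the class `P`. -/
def ArtinianTorsion (P : ModuleCat.{u} R → Prop) (x : R) (A : ModuleCat.{u} R) : Prop :=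
  IsArtinian R A ∧ P (of R (torsionBy R A x))

variable {P : ModuleCat.{u} R → Prop} (hP : IsSerre P) {x : R}

namespace ArtinianTorsion
variable {A B C : Type u} [AddCommGroup A] [AddCommGroup B] [AddCommGroup C] [Module R A]
  [Module R B] [Module R C]

section
include hP

lemma of_injective (f : A →ₗ[R] B) (hf : Function.Injective f)
    (h : ArtinianTorsion P x (of R B)) : ArtinianTorsion P x (of R A) := by
  have : IsArtinian R B := h.1
  exact ⟨isArtinian_of_injective f hf, hP.of_injective (torsionByMap x f)
    (fun a b hab ↦ Subtype.ext (hf congr(($hab : B)))) h.2⟩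

lemma pow (h : ArtinianTorsion P x (of R A)) (k : ℕ) : P (of R (torsionBy R A (x ^ k))) := by
  induction k with
  | zero =>
    have : Subsingleton (torsionBy R A (x ^ 0)) := subsingleton_of_forall_eq 0 fun ⟨a, ha⟩ ↦ by
      rw [mem_torsionBy_iff, pow_zero, one_smul] at ha
      exact Subtype.ext ha
    exact hP.of_subsingleton
  | succ k ih =>
    let f : torsionBy R A x →ₗ[R] torsionBy R A (x ^ (k + 1)) := inclusion fun a ha ↦ by
      rw [mem_torsionBy_iff] at ha ⊢
      rw [pow_succ, mul_smul, ha, smul_zero]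
    let g : torsionBy R A (x ^ (k + 1)) →ₗ[R] torsionBy R A (x ^ k) :=
      LinearMap.restrict (LinearMap.lsmul R A x) fun a ha ↦ by
        rw [mem_torsionBy_iff] at ha ⊢
        rwa [LinearMap.lsmul_apply, smul_smul, ← pow_succ]
    refine hP.middle f g (fun a ↦ ⟨fun ha ↦ ⟨⟨a, congr(($ha : A))⟩, rfl⟩, ?_⟩) h.2 ih
    rintro ⟨a, rfl⟩
    exact Subtype.ext a.2

lemma of_surjective (g : A →ₗ[R] B) (hg : Function.Surjective g)
    (h : ArtinianTorsion P x (of R A)) : ArtinianTorsion P x (of R B) := by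
  have : IsArtinian R A := h.1
  refine ⟨isArtinian_of_surjective A g hg, ?_⟩
  obtain ⟨m, hm⟩ := IsArtinian.range_smul_pow_stabilizes (LinearMap.ker g) x
  let E : Submodule R (torsionBy R A (x ^ (m + 1))) :=
    comap (torsionBy R A (x ^ (m + 1))).subtype (comap g (torsionBy R B x))
  let q : E →ₗ[R] torsionBy R B x :=
    LinearMap.codRestrict _ (g ∘ₗ Submodule.subtype _ ∘ₗ Submodule.subtype _) fun a ↦ a.2
  refine hP.of_surjective q ?_ (hP.of_injective E.subtype E.subtype_injective (pow hP h (m + 1)))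
  rintro ⟨b, hb⟩
  obtain ⟨a, rfl⟩ := hg b
  have hxa : x • a ∈ LinearMap.ker g := by
    rw [LinearMap.mem_ker, map_smul]
    exact hb
  have : x ^ m • (⟨x • a, hxa⟩ : LinearMap.ker g) ∈
      LinearMap.range (x ^ (m + 1) • (LinearMap.id : LinearMap.ker g →ₗ[R] LinearMap.ker g)) := by
    rw [← hm (m + 1) (Nat.le_succ m)]
    exact ⟨_, rfl⟩
  obtain ⟨b, hb'⟩ := this
  have hb' : x ^ (m + 1) • b.1 = x ^ m • x • a := congr(($hb' : A))
  have hgb : g b = 0 := b.2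
  refine ⟨⟨⟨a - b, ?_⟩, ?_⟩, ?_⟩
  · rw [mem_torsionBy_iff, smul_sub, hb', smul_smul, ← pow_succ, sub_self]
  · change g (a - b) ∈ torsionBy R B x
    rwa [map_sub, hgb, sub_zero]
  · refine Subtype.ext ?_
    change g (a - b) = g a
    rw [map_sub, hgb, sub_zero]

lemma isSerre : IsSerre (ArtinianTorsion P x) where
  zero := ⟨inferInstanceAs (IsArtinian R PUnit.{u + 1}), hP.of_subsingleton⟩
  middle {A B C} _ _ _ _ _ _ f g hfg hA hC := by
    have hf := of_surjective hP f.rangeRestrict f.surjective_rangeRestrict hA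
    have : IsArtinian R A := hA.1
    have : IsArtinian R C := hC.1
    refine ⟨isArtinian_of_range_eq_ker f g hfg.linearMap_ker_eq.symm,
      hP.middle (torsionByMap x (LinearMap.range f).subtype) (torsionByMap x g)
        (fun b ↦ ⟨fun hb ↦ ?_, ?_⟩) hf.2 hC.2⟩
    · obtain ⟨a, ha⟩ := (hfg b.1).1 congr(($hb : C))
      exact ⟨⟨⟨b.1, a, ha⟩, Subtype.ext b.2⟩, rfl⟩
    · rintro ⟨⟨⟨_, a, rfl⟩, ha⟩, rfl⟩
      exact Subtype.ext ((hfg _).2 ⟨a, rfl⟩)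

end

end ArtinianTorsion

/-- Artinian modules `A` such that the submodule of elements killed by the list `l` is
Noetherian, described recursively. -/
def ArtinianTorsionList : List R → ModuleCat.{u} R → Prop
  | [], A => Module.Finite R A
  | x :: l, A => ArtinianTorsion (ArtinianTorsionList l) x A

lemma isSerre_artinianTorsionList [IsNoetherianRing R] :
    ∀ l : List R, IsSerre (ArtinianTorsionList l)
  | [] => isSerre_finite
  | _ :: l => ArtinianTorsion.isSerre (isSerre_artinianTorsionList l)

lemma artinianTorsionList_of_torsionBySet (l : List R) : ∀ (A : Type u) [AddCommGroup A]
    [Module R A] [IsArtinian R A], IsNoetherian R (torsionBySet R A {x | x ∈ l}) →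
    ArtinianTorsionList l (of R A) := by
  induction l with
  | nil =>
    intro A _ _ _ _
    have : torsionBySet R A {x | x ∈ ([] : List R)} = ⊤ := by
      ext a
      simp
    have : IsNoetherian R A := isNoetherian_of_linearEquiv
      (Submodule.topEquiv.symm.trans (LinearEquiv.ofEq _ _ this.symm)).symm
    exact inferInstanceAs (Module.Finite R A)
  | cons x l ih =>
    intro A _ _ _ _
    exact ⟨inferInstanceAs (IsArtinian R A), ih (torsionBy R A x)
      (isNoetherian_of_injective _ (torsionByConsMap_injective x l A))⟩

lemma finite_of_artinianTorsionList (l : List R) : ∀ (A : Type u) [AddCommGroup A] [Module R A],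
    ArtinianTorsionList l (of R A) → (∀ x ∈ l, ∀ a : A, x • a = 0) → Module.Finite R A := by
  induction l with
  | nil =>
    intro A _ _ h _
    exact h
  | cons x l ih =>
    intro A _ _ h hA
    have := ih (torsionBy R A x) h.2 fun y hy a ↦ Subtype.ext (hA y (List.mem_cons_of_mem _ hy) a)
    exact Module.Finite.of_surjective (torsionBy R A x).subtype
      fun a ↦ ⟨⟨a, hA x List.mem_cons_self a⟩, rfl⟩

end ModuleCat

end

noncomputable section

open Limits Submodule ModuleCat

section
variable {R : Type u} [CommRing R]

/-- The nonmaximal primes containing `𝔟`. -/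
def nonmaximalPrimes (𝔟 : Ideal R) : Set (Ideal R) := {p | p.IsPrime ∧ 𝔟 ≤ p ∧ ¬ p.IsMaximal}

/-- The elements avoiding all nonmaximal primes that contain `𝔟`. -/
def nonmaximalCompl (𝔟 : Ideal R) : Submonoid R where
  carrier := {s | ∀ p ∈ nonmaximalPrimes 𝔟, s ∉ p}
  one_mem' p hp h := hp.1.ne_top ((Ideal.eq_top_iff_one p).2 h)
  mul_mem' hx hy p hp h := (hp.1.mem_or_mem h).elim (hx p hp) (hy p hp)

variable {𝔟 : Ideal R}

lemma eq_of_le_of_mem_nonmaximalPrimes (hdim : ringKrullDim (R ⧸ 𝔟) ≤ 1) {p q : Ideal R}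
    (hp : p ∈ nonmaximalPrimes 𝔟) (hq : q.IsPrime) (hbq : 𝔟 ≤ q) (hqp : q ≤ p) : q = p := by
  by_contra hne
  obtain ⟨m, hm, hpm⟩ := Ideal.exists_le_maximal p hp.1.ne_top
  have hpm' : p < m := lt_of_le_of_ne hpm fun h ↦ hp.2.2 (h ▸ hm)
  rw [ringKrullDim_quotient] at hdim
  let s : LTSeries (PrimeSpectrum.zeroLocus (𝔟 : Set R)) :=
    { length := 2
      toFun := ![⟨⟨q, hq⟩, hbq⟩, ⟨⟨p, hp.1⟩, hp.2.1⟩, ⟨⟨m, hm.isPrime⟩, hp.2.1.trans hpm⟩]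
      step := fun i ↦ by
        fin_cases i
        · exact lt_of_le_of_ne hqp hne
        · exact hpm' }
  have h2 : ((2 : ℕ) : WithBot ℕ∞) ≤ 1 := (Order.LTSeries.length_le_krullDim s).trans hdim
  exact absurd h2 (by decide)

lemma finite_nonmaximalPrimes [IsNoetherianRing R] (hdim : ringKrullDim (R ⧸ 𝔟) ≤ 1) :
    (nonmaximalPrimes 𝔟).Finite := by
  refine (Ideal.finite_minimalPrimes_of_isNoetherianRing R 𝔟).subset fun p hp ↦ ?_
  exact ⟨⟨hp.1, hp.2.1⟩, fun q hq hqp ↦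
    (eq_of_le_of_mem_nonmaximalPrimes hdim hp hq.1 hq.2 hqp).ge⟩

lemma isArtinianRing_quotient [IsNoetherianRing R] (I : Ideal R)
    (h : ∀ p : Ideal R, p.IsPrime → I ≤ p → p.IsMaximal) : IsArtinianRing (R ⧸ I) := by
  rw [isArtinianRing_iff_isNoetherianRing_krullDimLE_zero]
  refine ⟨inferInstance, Ring.krullDimLE_zero_iff.2 fun p hp ↦ ?_⟩
  have := h (p.comap (Ideal.Quotient.mk I)) (hp.comap _)
    (Ideal.mk_ker.ge.trans (Ideal.comap_mono bot_le))
  rw [← Ideal.map_comap_of_surjective (Ideal.Quotient.mk I) Ideal.Quotient.mk_surjective p]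
  refine (Ideal.map_eq_top_or_isMaximal_of_surjective (Ideal.Quotient.mk I)
    Ideal.Quotient.mk_surjective this).resolve_left ?_
  rw [Ideal.map_comap_of_surjective (Ideal.Quotient.mk I) Ideal.Quotient.mk_surjective p]
  exact hp.ne_top

lemma isArtinian_of_finite_of_smul_eq_zero (I : Ideal R) [IsArtinianRing (R ⧸ I)] (N : Type u)
    [AddCommGroup N] [Module R N] [Module.Finite R N] (hN : ∀ a ∈ I, ∀ x : N, a • x = 0) :
    IsArtinian R N := by
  obtain ⟨n, f, hf⟩ := IsSerre.exists_surjective_pi N hN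
  have : IsArtinian R (R ⧸ I) :=
    isArtinian_of_surjective_algebraMap (R := R ⧸ I) Ideal.Quotient.mk_surjective
  exact isArtinian_of_surjective _ f hf

lemma isArtinian_of_isTorsion_nonmaximalCompl [IsNoetherianRing R] (N : Type u)
    [AddCommGroup N] [Module R N] [Module.Finite R N] (hN : ∀ a ∈ 𝔟, ∀ x : N, a • x = 0)
    (hS : ∀ x : N, ∃ s ∈ nonmaximalCompl 𝔟, s • x = 0) : IsArtinian R N := by
  obtain ⟨s, hs, hsN⟩ : ∃ s ∈ nonmaximalCompl 𝔟, ∀ x : N, s • x = 0 := by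
    choose σ hσ hσ' using hS
    obtain ⟨t, ht⟩ := Module.Finite.fg_top (R := R) (M := N)
    refine ⟨∏ x ∈ t, σ x, prod_mem fun x _ ↦ hσ x, fun x ↦ ?_⟩
    have : (⊤ : Submodule R N) ≤ torsionBy R N (∏ x ∈ t, σ x) := by
      rw [← ht, span_le]
      intro x hx
      obtain ⟨c, hc⟩ := Finset.dvd_prod_of_mem σ hx
      change (∏ x ∈ t, σ x) • x = 0
      rw [hc, mul_comm, mul_smul, hσ', smul_zero]
    exact this (mem_top (x := x))
  have := isArtinianRing_quotient (𝔟 ⊔ Ideal.span {s}) fun p hp h ↦ by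
    by_contra hmax
    exact hs p ⟨hp, le_sup_left.trans h, hmax⟩
      (h (Ideal.mem_sup_right (Ideal.mem_span_singleton_self s)))
  refine isArtinian_of_finite_of_smul_eq_zero (𝔟 ⊔ Ideal.span {s}) N ?_
  intro a ha x
  obtain ⟨b, hb, c, hc, rfl⟩ := mem_sup.1 ha
  obtain ⟨c, rfl⟩ := Ideal.mem_span_singleton'.1 hc
  rw [add_smul, hN b hb, mul_smul, hsN, smul_zero, add_zero]

/-- The module `Ext^i(R/𝔟, X)` is finitely generated. -/
abbrev ExtFin (𝔟 : Ideal R) (X : Type u) [AddCommGroup X] [Module R X] (i : ℕ) : Prop :=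
  ExtIn (fun Y : ModuleCat.{u} R ↦ Module.Finite R Y) (R ⧸ 𝔟) X i

lemma finite_torsionBySet_of_extFin [IsNoetherianRing R] (X : Type u) [AddCommGroup X]
    [Module R X] (h : ExtFin 𝔟 X 0) : Module.Finite R (torsionBySet R X 𝔟) := by
  have : Module.Finite R ((R ⧸ 𝔟) →ₗ[R] X) := isSerre_finite.extIn_zero_iff.1 h
  let q : ((R ⧸ 𝔟) →ₗ[R] X) →ₗ[R] torsionBySet R X 𝔟 :=
    LinearMap.codRestrict _ (LinearMap.applyₗ (1 : R ⧸ 𝔟)) fun f ↦ by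
      rw [mem_torsionBySet_iff]
      rintro ⟨a, ha⟩
      rw [LinearMap.applyₗ_apply_apply, ← map_smul]
      have : a • (1 : R ⧸ 𝔟) = 0 := by
        rw [Algebra.smul_def, mul_one]
        exact Ideal.Quotient.eq_zero_iff_mem.2 ha
      rw [this, map_zero]
  refine Module.Finite.of_surjective q ?_
  rintro ⟨x, hx⟩
  rw [mem_torsionBySet_iff] at hx
  refine ⟨Submodule.liftQ 𝔟 (LinearMap.toSpanSingleton R X x) fun a ha ↦ hx ⟨a, ha⟩, ?_⟩
  exact Subtype.ext (one_smul R x)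

lemma ext_smul_eq_zero {X : ModuleCat.{u} R} {i : ℕ} {a : R} (ha : a ∈ 𝔟)
    (x : Abelian.Ext (of R (R ⧸ 𝔟)) X i) : a • x = 0 := by
  have : a • 𝟙 (of R (R ⧸ 𝔟)) = 0 := by
    ext
    change a • (1 : R ⧸ 𝔟) = 0
    rw [Algebra.smul_def, mul_one]
    exact Ideal.Quotient.eq_zero_iff_mem.2 ha
  rw [← Abelian.Ext.mk₀_id_comp x, ← Abelian.Ext.smul_comp, ← Abelian.Ext.mk₀_smul, this,
    Abelian.Ext.mk₀_zero, Abelian.Ext.zero_comp]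

lemma exists_list_span_eq [IsNoetherianRing R] (𝔟 : Ideal R) :
    ∃ l : List R, Ideal.span {x | x ∈ l} = 𝔟 := by
  obtain ⟨s, hs⟩ := IsNoetherian.noetherian 𝔟
  exact ⟨s.toList, by simpa using hs⟩

lemma exists_pow_smul_eq_zero {X : Type u} [AddCommGroup X] [Module R X]
    (hX : IsTorsionIdeal 𝔟 X) {x : R} (hx : x ∈ 𝔟) (a : X) : ∃ n : ℕ, x ^ n • a = 0 := by
  obtain ⟨n, hn⟩ := hX a
  exact ⟨n, hn _ (Ideal.pow_mem_pow hx n)⟩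

lemma extFin_of_isTorsion_nonmaximalCompl [IsNoetherianRing R] (W : Type u) [AddCommGroup W]
    [Module R W] (hW : IsTorsionIdeal 𝔟 W) (hS : ∀ x : W, ∃ s ∈ nonmaximalCompl 𝔟, s • x = 0)
    (h : ExtFin 𝔟 W 0) (i : ℕ) : ExtFin 𝔟 W i := by
  obtain ⟨l, hl⟩ := exists_list_span_eq 𝔟
  have hl' (x) (hx : x ∈ l) : x ∈ 𝔟 := hl ▸ Ideal.subset_span hx
  have hT : torsionBySet R W {x | x ∈ l} = torsionBySet R W 𝔟 := by
    rw [torsionBySet_eq_torsionBySet_span, hl]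
  have hfin : Module.Finite R (torsionBySet R W 𝔟) := finite_torsionBySet_of_extFin W h
  have hart : IsArtinian R (torsionBySet R W 𝔟) :=
    isArtinian_of_isTorsion_nonmaximalCompl (𝔟 := 𝔟) _
      (fun a ha x ↦ Subtype.ext ((mem_torsionBySet_iff _ _).1 x.2 ⟨a, ha⟩))
      fun x ↦ by
        obtain ⟨s, hs, hsx⟩ := hS x.1
        exact ⟨s, hs, Subtype.ext hsx⟩
  rw [← hT] at hfin hart
  have := isArtinian_of_torsionBySet l W (fun x hx a ↦ exists_pow_smul_eq_zero hW (hl' x hx) a) hart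
  have hWl := artinianTorsionList_of_torsionBySet l W
    (isNoetherian_of_isNoetherianRing_of_finite R _)
  exact finite_of_artinianTorsionList l _
    ((isSerre_artinianTorsionList l).extIn_of_mem (R ⧸ 𝔟) hWl i)
    fun x hx y ↦ ext_smul_eq_zero (hl' x hx) y

end

section
variable {R : Type u} [CommRing R] [IsNoetherianRing R] {𝔟 : Ideal R}

lemma isArtinianRing_localization_quotient (hdim : ringKrullDim (R ⧸ 𝔟) ≤ 1) :
    IsArtinianRing (Localization (nonmaximalCompl 𝔟) ⧸
      𝔟.map (algebraMap R (Localization (nonmaximalCompl 𝔟)))) := by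
  set S := nonmaximalCompl 𝔟
  set R' := Localization S
  have key (Q : Ideal R') (hQ : Q.IsPrime) (h : 𝔟.map (algebraMap R R') ≤ Q) :
      Q.under R ∈ nonmaximalPrimes 𝔟 := by
    obtain ⟨hq, hdisj⟩ := (IsLocalization.isPrime_iff_isPrime_disjoint S R' Q).1 hQ
    have hbq : 𝔟 ≤ Q.under R := Ideal.map_le_iff_le_comap.1 h
    have hfin := finite_nonmaximalPrimes hdim
    have hsub : (Q.under R : Set R) ⊆ ⋃ i ∈ (hfin.toFinset : Set (Ideal R)), (i : Set R) := by
      intro a ha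
      by_contra hcon
      have haS : a ∈ S := fun p hp hap ↦ hcon (Set.mem_biUnion (by simpa using hp) hap)
      exact Set.disjoint_left.1 hdisj haS ha
    obtain ⟨p, hp, hle⟩ := (Ideal.subset_union_prime (f := fun i ↦ i) ⊤ ⊤ fun i hi _ _ ↦
      ((hfin.mem_toFinset).1 hi).1).1 hsub
    rw [Set.Finite.mem_toFinset] at hp
    rwa [eq_of_le_of_mem_nonmaximalPrimes hdim hp hq hbq hle]
  have : IsNoetherianRing R' := IsLocalization.isNoetherianRing S R' inferInstance
  refine isArtinianRing_quotient _ fun Q hQ h ↦ ?_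
  obtain ⟨Q', hQ', hle⟩ := Ideal.exists_le_maximal Q hQ.ne_top
  have h1 := key Q hQ h
  have h2 := key Q' hQ'.isPrime (h.trans hle)
  have h3 := eq_of_le_of_mem_nonmaximalPrimes hdim h2 h1.1 h1.2.1 (Ideal.comap_mono hle)
  rw [← IsLocalization.map_under S R' Q, h3, IsLocalization.map_under S R' Q']
  exact hQ'

lemma isArtinian_localizedModule (hdim : ringKrullDim (R ⧸ 𝔟) ≤ 1) (X : Type u) [AddCommGroup X]
    [Module R X] (hX : IsTorsionIdeal 𝔟 X) (h : ExtFin 𝔟 X 0) :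
    IsArtinian (Localization (nonmaximalCompl 𝔟)) (LocalizedModule (nonmaximalCompl 𝔟) X) := by
  set S := nonmaximalCompl 𝔟
  set R' := Localization S
  let f := LocalizedModule.mkLinearMap S X
  obtain ⟨l, hl⟩ := exists_list_span_eq 𝔟
  have hl' (x) (hx : x ∈ l) : x ∈ 𝔟 := hl ▸ Ideal.subset_span hx
  have hfin : Module.Finite R (torsionBySet R X 𝔟) := finite_torsionBySet_of_extFin X h
  have hR' : IsNoetherianRing R' := IsLocalization.isNoetherianRing S R' inferInstance
  have hart : IsArtinianRing (R' ⧸ 𝔟.map (algebraMap R R')) :=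
    isArtinianRing_localization_quotient hdim
  have hle : torsionBySet R' (LocalizedModule S X) {y | y ∈ l.map (algebraMap R R')} ≤
      (torsionBySet R X 𝔟).localized' R' S f := by
    intro z hz
    obtain ⟨⟨a, s⟩, rfl⟩ := IsLocalizedModule.mk'_surjective S f z
    change IsLocalizedModule.mk' f a s ∈ _ at hz
    have h1 (x : R) (hx : x ∈ l) : ∃ c : S, (c : R) • x • a = 0 := by
      refine (IsLocalizedModule.mk'_eq_zero' f s).1 ?_
      rw [IsLocalizedModule.mk'_smul]
      have := (mem_torsionBySet_iff _ _).1 hz ⟨algebraMap R R' x, List.mem_map.2 ⟨x, hx, rfl⟩⟩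
      rwa [algebraMap_smul] at this
    obtain ⟨c, hc⟩ : ∃ c : S, ∀ x ∈ l, x • c • a = 0 := by
      clear hl hl' hz
      induction l with
      | nil => exact ⟨1, by simp⟩
      | cons y l ih =>
        obtain ⟨c, hc⟩ := ih fun x hx ↦ h1 x (List.mem_cons_of_mem _ hx)
        obtain ⟨c', hc'⟩ := h1 y List.mem_cons_self
        refine ⟨c * c', fun x hx ↦ ?_⟩
        rw [mul_smul]
        obtain rfl | hx := List.mem_cons.1 hx
        · rw [smul_comm x c, smul_comm x c', Submonoid.smul_def c', hc', smul_zero]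
        · rw [smul_comm c c', smul_comm x c', hc x hx, smul_zero]
    rw [mem_localized']
    refine ⟨c • a, ?_, c * s, IsLocalizedModule.mk'_cancel_left f a c s⟩
    rw [← hl, ← torsionBySet_eq_torsionBySet_span, mem_torsionBySet_iff]
    exact fun x ↦ hc x.1 x.2
  have hspan : torsionBySet R' (LocalizedModule S X) {y | y ∈ l.map (algebraMap R R')} =
      torsionBySet R' (LocalizedModule S X) (𝔟.map (algebraMap R R')) := by
    rw [torsionBySet_eq_torsionBySet_span, ← hl, Ideal.map_span]
    congr 3
    ext y
    simp
  have : Module.Finite R' ((torsionBySet R X 𝔟).localized' R' S f) :=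
    Module.Finite.of_isLocalizedModule S (toLocalized' R' S f (torsionBySet R X 𝔟))
  have : Module.Finite R'
      (torsionBySet R' (LocalizedModule S X) {y | y ∈ l.map (algebraMap R R')}) :=
    Module.Finite.of_injective (inclusion hle) (inclusion_injective hle)
  refine isArtinian_of_torsionBySet (l.map (algebraMap R R')) _ (fun y hy z ↦ ?_)
    (isArtinian_of_finite_of_smul_eq_zero (𝔟.map (algebraMap R R')) _ fun a ha z ↦ ?_)
  · obtain ⟨x, hx, rfl⟩ := List.mem_map.1 hy
    obtain ⟨⟨a, s⟩, rfl⟩ := IsLocalizedModule.mk'_surjective S f z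
    obtain ⟨n, hn⟩ := exists_pow_smul_eq_zero hX (hl' x hx) a
    refine ⟨n, ?_⟩
    rw [← map_pow, algebraMap_smul]
    change x ^ n • IsLocalizedModule.mk' f a s = 0
    rw [← IsLocalizedModule.mk'_smul, hn, IsLocalizedModule.mk'_zero]
  · exact Subtype.ext ((mem_torsionBySet_iff _ _).1 (hspan.le z.2) ⟨a, ha⟩)

lemma exists_pow_smul_sub_eq_zero (hdim : ringKrullDim (R ⧸ 𝔟) ≤ 1) (X : Type u) [AddCommGroup X]
    [Module R X] (hX : IsTorsionIdeal 𝔟 X) (h : ExtFin 𝔟 X 0) (x : R) :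
    ∃ m ≠ 0, ∀ z : X, ∃ s ∈ nonmaximalCompl 𝔟, ∃ w : X, x ^ m • (s • z - x ^ m • w) = 0 := by
  have := isArtinian_localizedModule hdim X hX h
  set S := nonmaximalCompl 𝔟
  set R' := Localization S
  let f := LocalizedModule.mkLinearMap S X
  obtain ⟨n, hn⟩ := IsArtinian.range_smul_pow_stabilizes (LocalizedModule S X) (algebraMap R R' x)
  refine ⟨n + 1, by simp, fun z ↦ ?_⟩
  have h1 : x ^ (n + 1) • f z ∈ LinearMap.range
      (algebraMap R R' x ^ (n + 1 + (n + 1)) • (LinearMap.id : LocalizedModule S X →ₗ[R'] _)) := by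
    rw [← hn _ (by lia), hn (n + 1) (by lia)]
    exact ⟨f z, by rw [LinearMap.smul_apply, LinearMap.id_apply, ← map_pow, algebraMap_smul]⟩
  obtain ⟨w, hw⟩ := h1
  rw [LinearMap.smul_apply, LinearMap.id_apply, ← map_pow, algebraMap_smul] at hw
  obtain ⟨⟨a, s⟩, rfl⟩ := IsLocalizedModule.mk'_surjective S f w
  have hs : (s : R) • IsLocalizedModule.mk' f a s = f a := IsLocalizedModule.mk'_cancel' f a s
  have h2 : f (x ^ (n + 1) • ((s : R) • z - x ^ (n + 1) • a)) = 0 := by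
    rw [map_smul, map_sub, map_smul, map_smul, smul_sub, smul_comm _ (s : R), ← hw, ← hs,
      smul_smul, smul_smul, smul_smul, sub_eq_zero]
    change _ • IsLocalizedModule.mk' f a s = _
    congr 1
    ring
  obtain ⟨c, hc⟩ := (IsLocalizedModule.eq_zero_iff S f).1 h2
  refine ⟨c * s, mul_mem c.2 s.2, c • a, ?_⟩
  rw [mul_smul, smul_comm (x ^ (n + 1)) c, ← Submonoid.smul_def, ← smul_sub, smul_comm]
  exact hc

end

section
variable {R : Type u} [CommRing R] [IsNoetherianRing R] {𝔟 : Ideal R}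

omit [IsNoetherianRing R] in
lemma exact_subtype_ker_rangeRestrict {A B : Type u} [AddCommGroup A] [AddCommGroup B]
    [Module R A] [Module R B] (f : A →ₗ[R] B) :
    Function.Exact (LinearMap.ker f).subtype f.rangeRestrict := by
  rw [LinearMap.exact_iff, LinearMap.ker_rangeRestrict, range_subtype]

open Abelian in
lemma extFin_succ_of_ker_of_quotient_range {a : R} (ha : a ∈ 𝔟) (X : Type u) [AddCommGroup X]
    [Module R X] {i : ℕ} (h : ExtFin 𝔟 (LinearMap.ker (LinearMap.lsmul R X a)) (i + 1))
    (h' : ExtFin 𝔟 (X ⧸ LinearMap.range (LinearMap.lsmul R X a)) i) : ExtFin 𝔟 X (i + 1) := by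
  let μ := LinearMap.lsmul R X a
  have hS₁ := shortExact_of_exact (exact_subtype_ker_rangeRestrict μ) (subtype_injective _)
    μ.surjective_rangeRestrict
  have hS₂ := shortExact_of_exact (LinearMap.exact_subtype_mkQ (LinearMap.range μ))
    (subtype_injective _) (mkQ_surjective _)
  let N := of R (R ⧸ 𝔟)
  let α := (Ext.mk₀ (ofHom (LinearMap.ker μ).subtype)).postcompOfLinear R N (add_zero (i + 1))
  let β := (Ext.mk₀ (ofHom μ.rangeRestrict)).postcompOfLinear R N (add_zero (i + 1))
  let γ := (Ext.mk₀ (ofHom (LinearMap.range μ).subtype)).postcompOfLinear R N (add_zero (i + 1))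
  let δ := hS₂.extClass.postcompOfLinear R N (rfl : i + 1 = i + 1)
  have hγδ (x) : γ (δ x) = 0 := by
    have := hS₂.extClass_comp
    change (x.comp _ (rfl : i + 1 = i + 1)).comp _ (add_zero (i + 1)) = 0
    rw [Ext.comp_assoc_of_third_deg_zero, this, Ext.comp_zero]
  have hβγ (x) : γ (β x) = 0 := by
    change (x.comp _ (add_zero (i + 1))).comp _ (add_zero (i + 1)) = 0
    have : ofHom μ.rangeRestrict ≫ ofHom (LinearMap.range μ).subtype = a • 𝟙 (of R X) := rfl
    rw [Ext.comp_assoc_of_third_deg_zero, Ext.mk₀_comp_mk₀, this, ← Ext.smul_eq_comp_mk₀]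
    exact ext_smul_eq_zero ha x
  have hker : Module.Finite R (LinearMap.ker γ) := by
    refine isSerre_finite.of_surjective (δ.codRestrict (LinearMap.ker γ) hγδ) ?_ h'
    rintro ⟨x, hx⟩
    obtain ⟨y, hy⟩ := Ext.covariant_sequence_exact₁ N hS₂ x hx rfl
    exact ⟨y, Subtype.ext hy⟩
  refine isSerre_finite.middle α (β.codRestrict (LinearMap.ker γ) hβγ) (fun x ↦ ⟨fun hx ↦ ?_, ?_⟩)
    h hker
  · exact Ext.covariant_sequence_exact₂ N hS₁ x (congrArg (LinearMap.ker γ).subtype hx)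
  · rintro ⟨x, rfl⟩
    refine Subtype.ext ?_
    change (x.comp _ (add_zero (i + 1))).comp _ (add_zero (i + 1)) = 0
    have : ofHom (LinearMap.ker μ).subtype ≫ ofHom μ.rangeRestrict = 0 :=
      (shortComplexOfExact (exact_subtype_ker_rangeRestrict μ)).zero
    rw [Ext.comp_assoc_of_third_deg_zero, Ext.mk₀_comp_mk₀, this, Ext.mk₀_zero, Ext.comp_zero]

omit [IsNoetherianRing R] in
lemma IsTorsionIdeal.of_injective {X Y : Type u} [AddCommGroup X] [AddCommGroup Y] [Module R X]
    [Module R Y] (hY : IsTorsionIdeal 𝔟 Y) (f : X →ₗ[R] Y) (hf : Function.Injective f) :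
    IsTorsionIdeal 𝔟 X := fun x ↦ by
  obtain ⟨n, hn⟩ := hY (f x)
  exact ⟨n, fun a ha ↦ hf (by rw [map_smul, hn a ha, map_zero])⟩

omit [IsNoetherianRing R] in
lemma IsTorsionIdeal.of_surjective {X Y : Type u} [AddCommGroup X] [AddCommGroup Y] [Module R X]
    [Module R Y] (hX : IsTorsionIdeal 𝔟 X) (f : X →ₗ[R] Y) (hf : Function.Surjective f) :
    IsTorsionIdeal 𝔟 Y := fun y ↦ by
  obtain ⟨x, rfl⟩ := hf y
  obtain ⟨n, hn⟩ := hX x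
  exact ⟨n, fun a ha ↦ by rw [← map_smul, hn a ha, map_zero]⟩

lemma extFin_of_isTorsion_of_list (hdim : ringKrullDim (R ⧸ 𝔟) ≤ 1) (L : List R)
    (hL : Ideal.span {x | x ∈ L} = 𝔟) (l : List R) : ∀ (X : Type u) [AddCommGroup X] [Module R X],
    IsTorsionIdeal 𝔟 X → (∀ x ∈ L, x ∈ l ∨ ∃ n : ℕ, ∀ a : X, x ^ n • a = 0) →
    ExtFin 𝔟 X 0 → ExtFin 𝔟 X 1 → ∀ i, ExtFin 𝔟 X i := by
  have hP : IsSerre fun Y : ModuleCat.{u} R ↦ Module.Finite R Y := isSerre_finite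
  induction l with
  | nil =>
    intro X _ _ _ hn h _ i
    have : Module.Finite R (torsionBySet R X 𝔟) := finite_torsionBySet_of_extFin X h
    rw [← hL, ← torsionBySet_eq_torsionBySet_span] at this
    have := isNoetherian_of_torsionBySet L X (fun x hx ↦ by simpa using hn x hx)
      (isNoetherian_of_isNoetherianRing_of_finite R _)
    exact hP.extIn_of_mem (R ⧸ 𝔟) (inferInstanceAs (Module.Finite R X)) i
  | cons x l ih =>
    intro X _ _ hX hn h0 h1
    by_cases hxL : x ∈ L
    swap
    · refine ih X hX (fun y hy ↦ ?_) h0 h1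
      refine (hn y hy).imp_left fun h ↦ (List.mem_cons.1 h).resolve_left ?_
      rintro rfl
      exact hxL hy
    have hxb : x ∈ 𝔟 := hL ▸ Ideal.subset_span hxL
    obtain ⟨m, hm, hmS⟩ := exists_pow_smul_sub_eq_zero hdim X hX h0 x
    let μ := LinearMap.lsmul R X (x ^ m)
    let Y := LinearMap.ker μ
    let I := LinearMap.range μ
    let η : Y →ₗ[R] X ⧸ I := I.mkQ ∘ₗ Y.subtype
    have ihY (A : Type u) [AddCommGroup A] [Module R A] (f : A →ₗ[R] Y)
        (hf : Function.Injective f) : ExtFin 𝔟 A 0 → ExtFin 𝔟 A 1 → ∀ i, ExtFin 𝔟 A i := by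
      refine ih A (hX.of_injective (Y.subtype ∘ₗ f) (Y.subtype_injective.comp hf)) fun y hy ↦ ?_
      obtain h | ⟨k, hk⟩ := hn y hy
      · obtain rfl | h := List.mem_cons.1 h
        · refine .inr ⟨m, fun a ↦ hf ?_⟩
          rw [map_smul, map_zero]
          exact Subtype.ext (f a).2
        · exact .inl h
      · refine .inr ⟨k, fun a ↦ hf ?_⟩
        rw [map_smul, map_zero]
        exact Subtype.ext (hk _)
    have e₁ := exact_subtype_ker_rangeRestrict μ
    have e₂ := LinearMap.exact_subtype_mkQ I
    have e₃ := exact_subtype_ker_rangeRestrict η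
    have e₄ := LinearMap.exact_subtype_mkQ (LinearMap.range η)
    have hI0 : ExtFin 𝔟 I 0 := hP.extIn_zero_of_injective I.subtype I.subtype_injective h0
    have hY : ∀ i, ExtFin 𝔟 Y i := ihY Y LinearMap.id Function.injective_id
      (hP.extIn_zero_of_injective Y.subtype Y.subtype_injective h0)
      (hP.extIn_left e₁ Y.subtype_injective μ.surjective_rangeRestrict h1 hI0)
    have hI1 : ExtFin 𝔟 I 1 :=
      hP.extIn_right e₁ Y.subtype_injective μ.surjective_rangeRestrict h1 (hY 2)
    have hZ0 : ExtFin 𝔟 (X ⧸ I) 0 := hP.extIn_right e₂ I.subtype_injective I.mkQ_surjective h0 hI1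
    have hZ'0 : ExtFin 𝔟 (LinearMap.range η) 0 :=
      hP.extIn_zero_of_injective _ (subtype_injective _) hZ0
    have hK : ∀ i, ExtFin 𝔟 (LinearMap.ker η) i := ihY _ _ (subtype_injective _)
      (hP.extIn_zero_of_injective _ (subtype_injective _) (hY 0))
      (hP.extIn_left e₃ (subtype_injective _) η.surjective_rangeRestrict (hY 1) hZ'0)
    have hZ' (i) : ExtFin 𝔟 (LinearMap.range η) i :=
      hP.extIn_right e₃ (subtype_injective _) η.surjective_rangeRestrict (hY i) (hK _)
    have hZ'' : ∀ i, ExtFin 𝔟 ((X ⧸ I) ⧸ LinearMap.range η) i := by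
      refine extFin_of_isTorsion_nonmaximalCompl _ (hX.of_surjective
        ((LinearMap.range η).mkQ ∘ₗ I.mkQ) ((mkQ_surjective _).comp (mkQ_surjective _)))
        (fun z ↦ ?_)
        (hP.extIn_right e₄ (subtype_injective _) (mkQ_surjective _) hZ0 (hZ' 1))
      obtain ⟨z, rfl⟩ := mkQ_surjective _ z
      obtain ⟨z, rfl⟩ := mkQ_surjective _ z
      obtain ⟨s, hs, w, hw⟩ := hmS z
      refine ⟨s, hs, ?_⟩
      rw [← map_smul, mkQ_apply, Quotient.mk_eq_zero]
      refine ⟨⟨s • z - x ^ m • w, hw⟩, ?_⟩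
      change I.mkQ (s • z - x ^ m • w) = _
      have : I.mkQ (x ^ m • w) = 0 := (Quotient.mk_eq_zero _).2 ⟨w, rfl⟩
      rw [map_sub, this, sub_zero, map_smul]
    have hZ (i) : ExtFin 𝔟 (X ⧸ I) i :=
      hP.extIn_middle e₄ (subtype_injective _) (mkQ_surjective _) (hZ' i) (hZ'' i)
    intro i
    cases i with
    | zero => exact h0
    | succ i =>
      exact extFin_succ_of_ker_of_quotient_range
        (Ideal.pow_mem_of_mem _ hxb _ (Nat.pos_of_ne_zero hm)) X (hY _) (hZ i)

lemma extFin_of_isTorsion (hdim : ringKrullDim (R ⧸ 𝔟) ≤ 1) (X : Type u) [AddCommGroup X]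
    [Module R X] (hX : IsTorsionIdeal 𝔟 X) (h0 : ExtFin 𝔟 X 0) (h1 : ExtFin 𝔟 X 1) (i : ℕ) :
    ExtFin 𝔟 X i := by
  obtain ⟨L, hL⟩ := exists_list_span_eq 𝔟
  exact extFin_of_isTorsion_of_list hdim L hL L X hX (fun x hx ↦ .inl hx) h0 h1 i

end

section
variable {R : Type u} [CommRing R] (𝔟 : Ideal R)

/-- The submodule of elements killed by a power of `𝔟`. -/
def powTorsion (X : Type u) [AddCommGroup X] [Module R X] : Submodule R X where
  carrier := {x | ∃ n : ℕ, ∀ a ∈ 𝔟 ^ n, a • x = 0}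
  zero_mem' := ⟨0, fun a _ ↦ smul_zero a⟩
  add_mem' := by
    rintro x y ⟨n, hn⟩ ⟨k, hk⟩
    refine ⟨n + k, fun a ha ↦ ?_⟩
    rw [smul_add, hn a (Ideal.pow_le_pow_right (Nat.le_add_right n k) ha),
      hk a (Ideal.pow_le_pow_right (Nat.le_add_left k n) ha), add_zero]
  smul_mem' := by
    rintro c x ⟨n, hn⟩
    exact ⟨n, fun a ha ↦ by rw [smul_comm, hn a ha, smul_zero]⟩

lemma isTorsionIdeal_powTorsion (X : Type u) [AddCommGroup X] [Module R X] :
    IsTorsionIdeal 𝔟 (powTorsion 𝔟 X) := fun x ↦ by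
  obtain ⟨n, hn⟩ := x.2
  exact ⟨n, fun a ha ↦ Subtype.ext (hn a ha)⟩

/-- Modules without nonzero elements killed by `𝔟`. -/
def IsTorsionFreeIdeal (X : Type u) [AddCommGroup X] [Module R X] : Prop :=
  ∀ x : X, (∀ a ∈ 𝔟, a • x = 0) → x = 0

variable {𝔟} {X : Type u} [AddCommGroup X] [Module R X]

lemma IsTorsionFreeIdeal.eq_zero (hX : IsTorsionFreeIdeal 𝔟 X) (n : ℕ) :
    ∀ x : X, (∀ a ∈ 𝔟 ^ n, a • x = 0) → x = 0 := by
  induction n with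
  | zero =>
    intro x h
    simpa using h 1 (by simp)
  | succ n ih =>
    refine fun x h ↦ hX x fun a ha ↦ ih _ fun c hc ↦ ?_
    rw [smul_smul]
    exact h _ (by rw [pow_succ]; exact Ideal.mul_mem_mul hc ha)

lemma IsTorsionIdeal.exists_pow_smul_eq_zero [Module.Finite R X] (hX : IsTorsionIdeal 𝔟 X) :
    ∃ n : ℕ, ∀ a ∈ 𝔟 ^ n, ∀ x : X, a • x = 0 := by
  choose ν hν using hX
  obtain ⟨t, ht⟩ := Module.Finite.fg_top (R := R) (M := X)
  refine ⟨t.sup ν, fun a ha x ↦ ?_⟩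
  have : (⊤ : Submodule R X) ≤ torsionBy R X a := by
    rw [← ht, span_le]
    exact fun x hx ↦ hν x a (Ideal.pow_le_pow_right (Finset.le_sup hx) ha)
  exact this (mem_top (x := x))

variable [IsNoetherianRing R]

lemma isTorsionFreeIdeal_quotient_powTorsion (X : Type u) [AddCommGroup X] [Module R X] :
    IsTorsionFreeIdeal 𝔟 (X ⧸ powTorsion 𝔟 X) := by
  intro x h
  obtain ⟨x, rfl⟩ := mkQ_surjective _ x
  let B : Submodule R X := Submodule.map (LinearMap.toSpanSingleton R X x) 𝔟
  have hB : B ≤ powTorsion 𝔟 X := by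
    rintro _ ⟨a, ha, rfl⟩
    exact (Quotient.mk_eq_zero _).1 (h a ha)
  have : Module.Finite R B := Module.Finite.iff_fg.2 ((IsNoetherian.noetherian 𝔟).map _)
  obtain ⟨n, hn⟩ := ((isTorsionIdeal_powTorsion 𝔟 X).of_injective (inclusion hB)
    (inclusion_injective hB)).exists_pow_smul_eq_zero
  refine (Quotient.mk_eq_zero _).2 ⟨n + 1, fun a ha ↦ ?_⟩
  have : 𝔟 ^ n * 𝔟 ≤ LinearMap.ker (LinearMap.toSpanSingleton R X x) := Ideal.mul_le.2
    fun c hc a ha ↦ by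
      rw [LinearMap.mem_ker, LinearMap.toSpanSingleton_apply, mul_smul]
      exact congr(($(hn c hc ⟨a • x, a, ha, rfl⟩) : X))
  rw [pow_succ] at ha
  exact this ha

lemma injective_powTorsion (X : Type u) [AddCommGroup X] [Module R X] [Module.Injective R X] :
    Module.Injective R (powTorsion 𝔟 X) := by
  refine Module.Baer.injective fun J f ↦ ?_
  obtain ⟨n, hn⟩ := ((isTorsionIdeal_powTorsion 𝔟 X).of_injective
    (LinearMap.range f).subtype (subtype_injective _)).exists_pow_smul_eq_zero
  obtain ⟨k, hk⟩ := Ideal.exists_pow_inf_eq_pow_smul 𝔟 J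
  have hle : 𝔟 ^ (n + k) ⊓ J ≤ 𝔟 ^ n * J := by
    have := hk (n + k) (by lia)
    rw [smul_eq_mul, Ideal.mul_top, Nat.add_sub_cancel] at this
    rw [this, smul_eq_mul]
    exact Ideal.mul_mono_right inf_le_right
  have hmul : 𝔟 ^ n * J ≤ Submodule.map J.subtype (LinearMap.ker f) := Ideal.mul_le.2
    fun c hc a ha ↦ ⟨c • ⟨a, ha⟩, by
      rw [SetLike.mem_coe, LinearMap.mem_ker, map_smul]
      exact congr(($(hn c hc ⟨_, ⟨a, ha⟩, rfl⟩) : powTorsion 𝔟 X)), rfl⟩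
  let K : Submodule R J := comap J.subtype (𝔟 ^ (n + k))
  let g : (J ⧸ K) →ₗ[R] X := K.liftQ ((powTorsion 𝔟 X).subtype ∘ₗ f) fun a ha ↦ by
    obtain ⟨b, hb, hab⟩ := hmul (hle ⟨ha, a.2⟩)
    obtain rfl : b = a := Subtype.ext hab
    rw [LinearMap.mem_ker, LinearMap.comp_apply, LinearMap.mem_ker.1 hb, map_zero]
  let j : (J ⧸ K) →ₗ[R] (R ⧸ 𝔟 ^ (n + k)) := K.mapQ (𝔟 ^ (n + k)) J.subtype le_rfl
  have hj : Function.Injective j := by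
    rw [← LinearMap.ker_eq_bot, ker_mapQ]
    exact mkQ_map_self K
  obtain ⟨h, hh⟩ := Module.Injective.out j hj g
  refine ⟨LinearMap.codRestrict _ (h ∘ₗ mkQ (𝔟 ^ (n + k))) fun r ↦ ⟨n + k, fun a ha ↦ ?_⟩,
    fun a ha ↦ Subtype.ext (hh (K.mkQ ⟨a, ha⟩))⟩
  rw [LinearMap.comp_apply, ← map_smul, ← map_smul]
  have : mkQ (𝔟 ^ (n + k)) (a • r) = 0 := (Quotient.mk_eq_zero _).2 (Ideal.mul_mem_right r _ ha)
  rw [this, map_zero]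

lemma injective_quotient_powTorsion (X : Type u) [AddCommGroup X] [Module R X]
    [Module.Injective R X] : Module.Injective R (X ⧸ powTorsion 𝔟 X) := by
  have := injective_powTorsion (𝔟 := 𝔟) X
  obtain ⟨p, hp⟩ := Module.Injective.out (powTorsion 𝔟 X).subtype (subtype_injective _)
    LinearMap.id
  let s : (X ⧸ powTorsion 𝔟 X) →ₗ[R] X := liftQ _
    (LinearMap.id - (powTorsion 𝔟 X).subtype ∘ₗ p) fun x hx ↦ by
      rw [LinearMap.mem_ker, LinearMap.sub_apply, LinearMap.comp_apply, sub_eq_zero]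
      exact congr(($(hp ⟨x, hx⟩) : X)).symm
  have hs (y) : (powTorsion 𝔟 X).mkQ (s y) = y := by
    obtain ⟨x, rfl⟩ := mkQ_surjective _ y
    change (powTorsion 𝔟 X).mkQ (x - (p x : X)) = _
    have : (powTorsion 𝔟 X).mkQ (p x : X) = 0 := (Quotient.mk_eq_zero _).2 (p x).2
    rw [map_sub, this, sub_zero]
  refine ⟨fun A B _ _ _ _ f hf g ↦ ?_⟩
  obtain ⟨h, hh⟩ := Module.Injective.out f hf (s ∘ₗ g)
  refine ⟨(powTorsion 𝔟 X).mkQ ∘ₗ h, fun a ↦ ?_⟩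
  rw [LinearMap.comp_apply, hh, LinearMap.comp_apply, hs]

omit [IsNoetherianRing R] in
lemma exists_injective_hom (X : Type u) [AddCommGroup X] [Module R X] :
    ∃ (E : Type u) (_ : AddCommGroup E) (_ : Module R E) (_ : Module.Injective R E)
      (f : X →ₗ[R] E), Function.Injective f := by
  let E := Injective.under (of R X)
  have : Injective (of R E) := inferInstanceAs (Injective E)
  exact ⟨E, inferInstance, inferInstance, Module.injective_module_of_injective_object R E,
    (Injective.ι (of R X)).hom, (ModuleCat.mono_iff_injective _).1 inferInstance⟩

lemma exists_injective_hom_of_isTorsionIdeal (hX : IsTorsionIdeal 𝔟 X) :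
    ∃ (E : Type u) (_ : AddCommGroup E) (_ : Module R E) (_ : Module.Injective R E)
      (f : X →ₗ[R] E), Function.Injective f ∧ IsTorsionIdeal 𝔟 E := by
  obtain ⟨E, _, _, _, f, hf⟩ := exists_injective_hom (R := R) X
  refine ⟨powTorsion 𝔟 E, inferInstance, inferInstance, injective_powTorsion E,
    f.codRestrict _ fun x ↦ ?_, fun x y h ↦ hf congr(($h : E)), isTorsionIdeal_powTorsion 𝔟 E⟩
  obtain ⟨n, hn⟩ := hX x
  exact ⟨n, fun a ha ↦ by rw [← map_smul, hn a ha, map_zero]⟩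

lemma exists_injective_hom_of_isTorsionFreeIdeal (hX : IsTorsionFreeIdeal 𝔟 X) :
    ∃ (E : Type u) (_ : AddCommGroup E) (_ : Module R E) (_ : Module.Injective R E)
      (f : X →ₗ[R] E), Function.Injective f ∧ IsTorsionFreeIdeal 𝔟 E := by
  obtain ⟨E, _, _, _, f, hf⟩ := exists_injective_hom (R := R) X
  refine ⟨E ⧸ powTorsion 𝔟 E, inferInstance, inferInstance, injective_quotient_powTorsion E,
    mkQ _ ∘ₗ f, ?_, isTorsionFreeIdeal_quotient_powTorsion E⟩
  rw [injective_iff_map_eq_zero]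
  intro x hx
  obtain ⟨n, hn⟩ := (Quotient.mk_eq_zero _).1 hx
  exact hX.eq_zero n x fun a ha ↦ hf (by rw [map_smul, hn a ha, map_zero])

end

end

noncomputable section

open Limits Submodule ModuleCat Abelian

section
variable {R : Type u} [CommRing R]

/-- The evaluation `Ext^0(R/I, X) → X` at the class of `1`. -/
def extZeroEval (I : Ideal R) (X : Type u) [AddCommGroup X] [Module R X] :
    Ext (cyclic I) (of R X) 0 →ₗ[R] X :=
  LinearMap.applyₗ (1 : R ⧸ I) ∘ₗ (Ext.linearEquiv₀.trans homLinearEquiv).toLinearMap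

variable {X Y : Type u} [AddCommGroup X] [Module R X] [AddCommGroup Y] [Module R Y]

lemma extZeroEval_mk₀ {I : Ideal R} (f : cyclic I ⟶ of R X) :
    extZeroEval I X (Ext.mk₀ f) = f.hom 1 := by
  have : Ext.linearEquiv₀ (R := R) (Ext.mk₀ f) = f := Ext.linearEquiv₀.apply_symm_apply f
  exact congr(($this).hom 1)

lemma exists_mk₀_eq {I : Ideal R} (x : Ext (cyclic I) (of R X) 0) :
    ∃ f, Ext.mk₀ f = x :=
  ⟨_, Ext.mk₀_linearEquiv₀_apply (R := R) x⟩

lemma extZeroEval_injective (I : Ideal R) : Function.Injective (extZeroEval I X) := by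
  intro x y h
  obtain ⟨f, rfl⟩ := exists_mk₀_eq x
  obtain ⟨g, rfl⟩ := exists_mk₀_eq y
  rw [extZeroEval_mk₀, extZeroEval_mk₀] at h
  congr 1
  ext
  exact h

lemma smul_extZeroEval {I : Ideal R} {a : R} (ha : a ∈ I) (x : Ext (cyclic I) (of R X) 0) :
    a • extZeroEval I X x = 0 := by
  obtain ⟨f, rfl⟩ := exists_mk₀_eq x
  have : a • (1 : R ⧸ I) = 0 := by
    rw [← map_one (Ideal.Quotient.mk I)]
    exact (Quotient.mk_eq_zero I).2 (by simpa using ha)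
  rw [extZeroEval_mk₀, ← map_smul, this, map_zero]

lemma exists_extZeroEval_eq {I : Ideal R} {x : X} (h : ∀ a ∈ I, a • x = 0) :
    ∃ y, extZeroEval I X y = x := by
  refine ⟨Ext.mk₀ (ofHom (liftQ I (LinearMap.toSpanSingleton R X x) h)), ?_⟩
  rw [extZeroEval_mk₀]
  exact one_smul R x

lemma extZeroEval_extRes {I J : Ideal R} (h : I ≤ J) (x : Ext (cyclic J) (of R X) 0) :
    extZeroEval I X (extRes h _ _ x) = extZeroEval J X x := by
  obtain ⟨f, rfl⟩ := exists_mk₀_eq x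
  rw [extRes_apply, Ext.mk₀_comp_mk₀, extZeroEval_mk₀, extZeroEval_mk₀]
  rfl

lemma extZeroEval_comp {I : Ideal R} (x : Ext (cyclic I) (of R X) 0) (f : X →ₗ[R] Y) :
    extZeroEval I Y (x.comp (Ext.mk₀ (ofHom f)) (add_zero 0)) = f (extZeroEval I X x) := by
  obtain ⟨g, rfl⟩ := exists_mk₀_eq x
  rw [Ext.mk₀_comp_mk₀, extZeroEval_mk₀, extZeroEval_mk₀]
  rfl

variable (𝔟 : Ideal R)

/-- `Ext^0(R/𝔟^t, X)` is the module of elements killed by `𝔟^t`, so the colimit is the torsion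
submodule. -/
def extColimPowTorsion (X : Type u) [AddCommGroup X] [Module R X] :
    ExtColim 𝔟 (of R X) 0 (powTorsion 𝔟 X) where
  ι t := (extZeroEval (𝔟 ^ t) X).codRestrict _ fun x ↦ ⟨t, fun a ha ↦ smul_extZeroEval ha x⟩
  ι_extRes h x := Subtype.ext (extZeroEval_extRes _ x)
  exists_ι_eq := by
    rintro ⟨y, t, ht⟩
    obtain ⟨x, hx⟩ := exists_extZeroEval_eq ht
    exact ⟨t, x, Subtype.ext hx⟩
  exists_extRes_eq_zero t x h := ⟨t, le_rfl, by
    have : x = 0 := extZeroEval_injective _ (by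
      rw [map_zero]
      exact congr(($h : X)))
    rw [this, map_zero]⟩

variable {𝔟}

lemma subsingleton_ext_succ_of_injective (N : ModuleCat.{u} R) (X : Type u) [AddCommGroup X]
    [Module R X] [Module.Injective R X] (i : ℕ) : Subsingleton (Ext N (of R X) (i + 1)) := by
  have := Module.injective_object_of_injective_module R X
  exact ⟨fun x y ↦ by rw [x.eq_zero_of_injective, y.eq_zero_of_injective]⟩

lemma IsTorsionFreeIdeal.subsingleton_ext_zero (hX : IsTorsionFreeIdeal 𝔟 X) (t : ℕ) :
    Subsingleton (Ext (cyclic (𝔟 ^ t)) (of R X) 0) :=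
  ⟨fun x y ↦ extZeroEval_injective _ (by
    rw [hX.eq_zero t _ fun a ha ↦ smul_extZeroEval ha x,
      hX.eq_zero t _ fun a ha ↦ smul_extZeroEval ha y])⟩

lemma IsTorsionFreeIdeal.extFin_zero (hX : IsTorsionFreeIdeal 𝔟 X) : ExtFin 𝔟 X 0 := by
  have : Subsingleton (Ext (cyclic 𝔟) (of R X) 0) :=
    ⟨fun x y ↦ extZeroEval_injective _ (by
      rw [hX _ fun a ha ↦ smul_extZeroEval ha x, hX _ fun a ha ↦ smul_extZeroEval ha y])⟩
  exact inferInstanceAs (Module.Finite R (Ext (cyclic 𝔟) (of R X) 0))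

section
variable {A B C : Type u} [AddCommGroup A] [AddCommGroup B] [AddCommGroup C] [Module R A]
  [Module R B] [Module R C] {f : A →ₗ[R] B} {g : B →ₗ[R] C} (hfg : Function.Exact f g)
  (hf : Function.Injective f) (hg : Function.Surjective g) {i : ℕ} {H : Type u} [AddCommGroup H]
  [Module R H]
include hfg hf hg

/-- Dimension shifting for the colimit of `Ext^i(R/𝔟^t, -)`. -/
def ModuleCat.ExtColim.ofSubsingleton (c : ExtColim 𝔟 (of R C) i H)
    (h : ∀ t, Subsingleton (Ext (cyclic (𝔟 ^ t)) (of R B) i))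
    (h' : ∀ t, Subsingleton (Ext (cyclic (𝔟 ^ t)) (of R B) (i + 1))) :
    ExtColim 𝔟 (of R A) (i + 1) H := by
  have hS := shortExact_of_exact hfg hf hg
  let φ (t : ℕ) := hS.extClass.postcompOfLinear R (cyclic (𝔟 ^ t)) (rfl : i + 1 = i + 1)
  have hφ (t : ℕ) : Function.Bijective (φ t) := by
    constructor
    · rw [injective_iff_map_eq_zero]
      intro x hx
      obtain ⟨y, rfl⟩ := Ext.covariant_sequence_exact₃ (cyclic (𝔟 ^ t)) hS x rfl hx
      rw [(h t).elim y 0, Ext.zero_comp]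
    · intro x
      exact Ext.covariant_sequence_exact₁ (cyclic (𝔟 ^ t)) hS x ((h' t).elim _ _) rfl
  let e (t : ℕ) := LinearEquiv.ofBijective (φ t) (hφ t)
  have he {s t : ℕ} (h : s ≤ t) (x) : (e t).symm (extRes (Ideal.pow_le_pow_right h) _ _ x) =
      extRes (Ideal.pow_le_pow_right h) _ _ ((e s).symm x) := by
    rw [LinearEquiv.symm_apply_eq]
    obtain ⟨x, rfl⟩ := (e s).surjective x
    rw [LinearEquiv.symm_apply_apply]
    exact extRes_comp _ x hS.extClass rfl
  exact
    { ι t := c.ι t ∘ₗ (e t).symm.toLinearMap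
      ι_extRes h x := (congrArg _ (he h x)).trans (c.ι_extRes h _)
      exists_ι_eq y := by
        obtain ⟨t, x, rfl⟩ := c.exists_ι_eq y
        exact ⟨t, e t x, congrArg _ ((e t).symm_apply_apply x)⟩
      exists_extRes_eq_zero t x hx := by
        obtain ⟨t', h, ht'⟩ := c.exists_extRes_eq_zero t _ hx
        exact ⟨t', h, (e t').symm.injective (by rw [he h, map_zero]; exact ht')⟩ }

end

variable [IsNoetherianRing R]

lemma IsTorsionIdeal.exists_extRes_eq_zero (n : ℕ) : ∀ {X : Type u} [AddCommGroup X] [Module R X],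
    IsTorsionIdeal 𝔟 X → ∀ (t : ℕ) (x : Ext (cyclic (𝔟 ^ t)) (of R X) (n + 1)),
    ∃ (t' : ℕ) (h : t ≤ t'), extRes (Ideal.pow_le_pow_right h) (of R X) (n + 1) x = 0 := by
  induction n with
  | zero =>
    intro X _ _ hX t x
    obtain ⟨E, _, _, _, f, hf, hE⟩ := exists_injective_hom_of_isTorsionIdeal hX
    have hS := shortExact_of_exact (LinearMap.exact_map_mkQ_range f) hf (mkQ_surjective _)
    obtain ⟨v, rfl⟩ := Ext.covariant_sequence_exact₁ (cyclic (𝔟 ^ t)) hS x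
      ((subsingleton_ext_succ_of_injective _ E _).elim _ _) (zero_add 1)
    obtain ⟨j, hj⟩ := mkQ_surjective _ (extZeroEval _ (E ⧸ LinearMap.range f) v)
    obtain ⟨k, hk⟩ := hE j
    refine ⟨max t k, le_max_left _ _, ?_⟩
    obtain ⟨u, hu⟩ := exists_extZeroEval_eq fun a ha ↦
      hk a (Ideal.pow_le_pow_right (le_max_right t k) ha)
    have huv : u.comp (Ext.mk₀ (ofHom (mkQ (LinearMap.range f)))) (add_zero 0) =
        extRes (Ideal.pow_le_pow_right (le_max_left t k)) _ _ v := extZeroEval_injective _ (by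
      rw [extZeroEval_comp, hu, hj, extZeroEval_extRes])
    have := hS.comp_extClass
    rw [extRes_comp]
    erw [← huv]
    rw [Ext.comp_assoc_of_second_deg_zero, this, Ext.comp_zero]
  | succ n ih =>
    intro X _ _ hX t x
    obtain ⟨E, _, _, _, f, hf, hE⟩ := exists_injective_hom_of_isTorsionIdeal hX
    have hS := shortExact_of_exact (LinearMap.exact_map_mkQ_range f) hf (mkQ_surjective _)
    obtain ⟨v, rfl⟩ := Ext.covariant_sequence_exact₁ (cyclic (𝔟 ^ t)) hS x
      ((subsingleton_ext_succ_of_injective _ E _).elim _ _) rfl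
    obtain ⟨t', h, ht'⟩ := ih (hE.of_surjective _ (mkQ_surjective (LinearMap.range f))) t v
    refine ⟨t', h, ?_⟩
    rw [extRes_comp]
    erw [ht']
    rw [Ext.zero_comp]

section
variable {A B C : Type u} [AddCommGroup A] [AddCommGroup B] [AddCommGroup C] [Module R A]
  [Module R B] [Module R C] {f : A →ₗ[R] B} {g : B →ₗ[R] C} (hfg : Function.Exact f g)
  (hf : Function.Injective f) (hg : Function.Surjective g) {i : ℕ} {H : Type u} [AddCommGroup H]
  [Module R H]
include hfg hf hg

/-- Passing to the quotient by a torsion submodule does not change the colimit of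
`Ext^{i+1}(R/𝔟^t, -)`. -/
def ModuleCat.ExtColim.ofIsTorsionIdeal (hA : IsTorsionIdeal 𝔟 A)
    (c : ExtColim 𝔟 (of R C) (i + 1) H) : ExtColim 𝔟 (of R B) (i + 1) H where
  ι t := c.ι t ∘ₗ (Ext.mk₀ (ofHom g)).postcompOfLinear R _ (add_zero (i + 1))
  ι_extRes h x :=
    (congrArg (c.ι _) (extRes_comp _ x _ (add_zero (i + 1))).symm).trans (c.ι_extRes h _)
  exists_ι_eq y := by
    have hS := shortExact_of_exact hfg hf hg
    obtain ⟨t, x, rfl⟩ := c.exists_ι_eq y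
    obtain ⟨t', h, ht'⟩ := hA.exists_extRes_eq_zero (i + 1) t (x.comp hS.extClass rfl)
    rw [extRes_comp] at ht'
    obtain ⟨z, hz⟩ := Ext.covariant_sequence_exact₃ _ hS _ rfl ht'
    exact ⟨t', z, (congrArg (c.ι t') hz).trans (c.ι_extRes h x)⟩
  exists_extRes_eq_zero t x hx := by
    have hS := shortExact_of_exact hfg hf hg
    obtain ⟨t', h, ht'⟩ := c.exists_extRes_eq_zero t _ hx
    have hx' := (extRes_comp (Ideal.pow_le_pow_right h) x (Ext.mk₀ (ofHom g))
      (add_zero (i + 1))).symm.trans ht'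
    obtain ⟨a, ha⟩ := Ext.covariant_sequence_exact₂ _ hS _ hx'
    obtain ⟨t'', h', ht''⟩ := hA.exists_extRes_eq_zero i t' a
    refine ⟨t'', h.trans h', ?_⟩
    rw [← extRes_extRes (Ideal.pow_le_pow_right h') (Ideal.pow_le_pow_right h), ← ha, extRes_comp]
    erw [ht'']
    rw [Ext.zero_comp]

end

lemma exists_extColim_extFin (hdim : ringKrullDim (R ⧸ 𝔟) ≤ 1) (i : ℕ) :
    ∀ (X : Type u) [AddCommGroup X] [Module R X], (∀ j, ExtFin 𝔟 X j) →
    ∃ (H : Type u) (_ : AddCommGroup H) (_ : Module R H), Nonempty (ExtColim 𝔟 (of R X) i H) ∧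
      IsTorsionIdeal 𝔟 H ∧ ∀ j, ExtFin 𝔟 H j := by
  have hP := isSerre_finite (R := R)
  have key (X : Type u) [AddCommGroup X] [Module R X] (hX : ∀ j, ExtFin 𝔟 X j) (j : ℕ) :
      ExtFin 𝔟 (powTorsion 𝔟 X) j :=
    extFin_of_isTorsion hdim _ (isTorsionIdeal_powTorsion 𝔟 X)
      (hP.extIn_zero_of_injective _ (subtype_injective _) (hX 0))
      (hP.extIn_left (LinearMap.exact_subtype_mkQ _) (subtype_injective _) (mkQ_surjective _)
        (hX 1) (isTorsionFreeIdeal_quotient_powTorsion X).extFin_zero) j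
  induction i with
  | zero =>
    exact fun X _ _ hX ↦ ⟨powTorsion 𝔟 X, inferInstance, inferInstance,
      ⟨extColimPowTorsion 𝔟 X⟩, isTorsionIdeal_powTorsion 𝔟 X, key X hX⟩
  | succ i ih =>
    intro X _ _ hX
    have hfree := isTorsionFreeIdeal_quotient_powTorsion (𝔟 := 𝔟) X
    obtain ⟨E, _, _, _, f, hf, hE⟩ := exists_injective_hom_of_isTorsionFreeIdeal hfree
    have hQ (j : ℕ) : ExtFin 𝔟 (X ⧸ powTorsion 𝔟 X) j :=
      hP.extIn_right (LinearMap.exact_subtype_mkQ _) (subtype_injective _) (mkQ_surjective _)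
        (hX j) (key X hX (j + 1))
    have hE' (j : ℕ) : ExtFin 𝔟 E j := by
      cases j with
      | zero => exact hE.extFin_zero
      | succ j =>
        have := subsingleton_ext_succ_of_injective (cyclic 𝔟) E j
        exact inferInstanceAs (Module.Finite R (Ext (cyclic 𝔟) (of R E) (j + 1)))
    obtain ⟨H, _, _, ⟨c⟩, hH⟩ := ih (E ⧸ LinearMap.range f) fun j ↦
      hP.extIn_right (LinearMap.exact_map_mkQ_range f) hf (mkQ_surjective _) (hE' j) (hQ (j + 1))
    have hsub (t j : ℕ) : Subsingleton (Ext (cyclic (𝔟 ^ t)) (of R E) j) := by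
      cases j with
      | zero => exact hE.subsingleton_ext_zero t
      | succ j => exact subsingleton_ext_succ_of_injective _ E j
    exact ⟨H, inferInstance, inferInstance,
      ⟨.ofIsTorsionIdeal (LinearMap.exact_subtype_mkQ _) (subtype_injective _) (mkQ_surjective _)
        (isTorsionIdeal_powTorsion 𝔟 X) (c.ofSubsingleton (LinearMap.exact_map_mkQ_range f) hf
          (mkQ_surjective _) (hsub · _) (hsub · _))⟩, hH⟩

omit [IsNoetherianRing R] in
lemma IsTorsionIdeal.support_subset (hX : IsTorsionIdeal 𝔟 X) :
    Module.support R X ⊆ PrimeSpectrum.zeroLocus 𝔟 := by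
  intro p hp a ha
  obtain ⟨x, hx⟩ := Module.mem_support_iff'.1 hp
  obtain ⟨n, hn⟩ := hX x
  by_contra h
  exact hx (a ^ n) (fun h' ↦ h (p.2.mem_of_pow_mem n h')) (hn _ (Ideal.pow_mem_pow ha n))

end

end

/-- Yang–Shen, Corollary 4.3(2) (module case): let `𝔞 ⊆ 𝔟` be proper ideals of a noetherian
ring `R` with `dim R/𝔟 ≤ 1`, and let `M` be an `R`-module with `Ext^i_R(R/𝔞, M)` finitely
generated for all `i`. Then `H^i_𝔟(M)` is `𝔟`-cofinite for all `i`. -/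
theorem localCohomology_isCofinite_of_le
    {R : Type u} [CommRing R] [IsNoetherianRing R] (𝔞 𝔟 : Ideal R)
    (hab : 𝔞 ≤ 𝔟) (ha : 𝔞 ≠ ⊤) (hb : 𝔟 ≠ ⊤)
    (hdim : ringKrullDim (R ⧸ 𝔟) ≤ 1)
    (M : ModuleCat.{u} R) (hext : ∀ i : ℕ, Module.Finite R (extIdeal 𝔞 i M)) :
    ∀ i : ℕ, IsCofinite 𝔟 ((localCohomology 𝔟 i).obj M) := by
  have hP := ModuleCat.isSerre_finite (R := R)
  have hb' := hP.extIn_of_finite (𝔞 := 𝔞) (M := M) (fun i ↦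
    have : Module.Finite R (((Ext R (ModuleCat R) i).obj (.op (.of R (R ⧸ 𝔞)))).obj M) := hext i
    Module.Finite.equiv (ProjectiveResolution.extLinearEquiv (ModuleCat.cyclic 𝔞) M i))
  intro i
  obtain ⟨H, _, _, ⟨c⟩, hH, hH'⟩ := exists_extColim_extFin hdim i M fun j ↦
    hb' j (R ⧸ 𝔟) fun a ha x ↦ by
      obtain ⟨x, rfl⟩ := Submodule.mkQ_surjective _ x
      exact (Submodule.Quotient.mk_eq_zero 𝔟).2 (𝔟.mul_mem_right x (hab ha))
  let e := c.equiv (ModuleCat.extColimLocalCohomology 𝔟 M i)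
  refine ⟨(hH.of_injective e.symm.toLinearMap e.symm.injective).support_subset, fun j ↦ ?_⟩
  have : Module.Finite R (Abelian.Ext (ModuleCat.cyclic 𝔟) ((localCohomology 𝔟 i).obj M) j) :=
    hP.extIn_of_equiv e (hH' j)
  exact Module.Finite.equiv
    (ProjectiveResolution.extLinearEquiv (ModuleCat.cyclic 𝔟) ((localCohomology 𝔟 i).obj M) j).symm
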